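/- arXiv:1504.03500 — 3 statements merged into one kernel-verified Lean document; each statement's English description precedes it below -/
import Mathlib

section
/- Let G be a cubic graph and P* a valid factor of G minimizing the number of components and, subject to that, the number of odd cycles. Then for any odd cycle C of P*, any two distinct vertices of C are joined by edges of G to two distinct odd path components of P* (in particular, each vertex of C is adjacent to a vertex of an odd path of P*, and no odd path receives two such edges from C). -/
open SimpleGraph

/-- A cubic graph: every vertex has degree 3. -/
def IsCubic {V : Type*} [Fintype V] (G : SimpleGraph V) : Prop :=
  ∀ v : V, Nat.card (G.neighborSet v) = 3

/-- A circular nowhere-zero `r`-flow: an orientation `dir` of `G` together with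
a flow value `f` on each directed edge, with values in `[1, r-1]` and flow
conservation at every vertex. -/
structure CNZF {V : Type*} [Fintype V] (G : SimpleGraph V) (r : ℝ) where
  dir : V → V → Bool
  f : V → V → ℝ
  orients : ∀ u v, G.Adj u v ↔ (dir u v = true ∨ dir v u = true)
  asymm : ∀ u v, dir u v = true → dir v u = false
  lb : ∀ u v, dir u v = true → 1 ≤ f u v
  ub : ∀ u v, dir u v = true → f u v ≤ r - 1
  conserv : ∀ v : V, (∑ u : V, if dir v u = true then f v u else 0)
      = ∑ u : V, if dir u v = true then f u v else 0

/-- Out-degree of a vertex in an orientation. -/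
noncomputable def outDeg {V : Type*} (dir : V → V → Bool) (v : V) : ℕ :=
  Nat.card {u | dir v u = true}

/-- Every connected component of the subgraph induced by `S` is a tree
on at most `m` vertices. -/
def MonoOK {V : Type*} (G : SimpleGraph V) (m : ℕ) (S : Set V) : Prop :=
  (G.induce S).IsAcyclic ∧
    ∀ c : (G.induce S).ConnectedComponent, Nat.card c.supp ≤ m

/-- A `k`-weak bisection, given by its first part `S`. -/
def IsWeakBisection {V : Type*} [Fintype V] (G : SimpleGraph V) (k : ℕ) (S : Set V) : Prop :=
  Nat.card S = Nat.card (Sᶜ : Set V) ∧ MonoOK G (k-2) S ∧ MonoOK G (k-2) (Sᶜ : Set V)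

/-- Every monochromatic component of the 2-coloring `c` has at most `m` vertices. -/
def MonoAtMost {V : Type*} (G : SimpleGraph V) (c : V → Bool) (m : ℕ) : Prop :=
  ∀ b : Bool, ∀ comp : (G.induce {v | c v = b}).ConnectedComponent,
    Nat.card comp.supp ≤ m

/-- Edges of `L_k` (on vertex labels `0, …, 5+2k`): `L_0` is `K_{3,3}` minus an
edge (parts `{0,1,4}` and `{2,3,5}`, edge `45` removed, degree-2 vertices `4,5`);
at step `j` the two new adjacent vertices `4+2j, 5+2j` are attached to the
previous degree-2 vertices `2+2j, 3+2j`. The degree-2 vertices of `L_k` are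
`4+2k` and `5+2k`. -/
def LEdge (k : ℕ) (a b : ℕ) : Prop :=
  (a, b) ∈ ({(0,2),(0,3),(0,5),(1,2),(1,3),(1,5),(4,2),(4,3)} : Set (ℕ × ℕ)) ∨
  ∃ j, 1 ≤ j ∧ j ≤ k ∧
    ((a, b) = (4+2*j, 5+2*j) ∨ (a, b) = (2+2*j, 4+2*j) ∨ (a, b) = (3+2*j, 5+2*j))

/-- The graph `L_k`. -/
def Lgraph (k : ℕ) : SimpleGraph (Fin (6+2*k)) :=
  SimpleGraph.fromRel (fun a b => LEdge k a.val b.val)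

/-- Edges of `T_k`: one copy of `L'_k` (the copy of `L_k` on `0..5+2k` with apex
`6+2k`), two copies of `L'_0` (on `7+2k..12+2k` with apex `13+2k`, and on
`14+2k..19+2k` with apex `20+2k`), and a central vertex `21+2k` adjacent to the
three apexes. -/
def TEdge (k : ℕ) (a b : ℕ) : Prop :=
  LEdge k a b
  ∨ (a = 6+2*k ∧ (b = 4+2*k ∨ b = 5+2*k))
  ∨ (∃ a' b', LEdge 0 a' b' ∧ a = 7+2*k+a' ∧ b = 7+2*k+b')
  ∨ (a = 13+2*k ∧ (b = 11+2*k ∨ b = 12+2*k))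
  ∨ (∃ a' b', LEdge 0 a' b' ∧ a = 14+2*k+a' ∧ b = 14+2*k+b')
  ∨ (a = 20+2*k ∧ (b = 18+2*k ∨ b = 19+2*k))
  ∨ (a = 21+2*k ∧ (b = 6+2*k ∨ b = 13+2*k ∨ b = 20+2*k))

/-- The cubic graph `T_k`. -/
def Tgraph (k : ℕ) : SimpleGraph (Fin (22+2*k)) :=
  SimpleGraph.fromRel (fun a b => TEdge k a.val b.val)

/-- A valid factor of `G`: a spanning subgraph all of whose components are paths
or cycles (equivalently, all degrees are 1 or 2), such that the two endpoints
(degree-1 vertices) of every odd component are non-adjacent in `G`; in particular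
no component is an isolated vertex. -/
def IsValidFactor {V : Type*} (G H : SimpleGraph V) : Prop :=
  H ≤ G ∧
  (∀ v : V, 1 ≤ Nat.card (H.neighborSet v) ∧ Nat.card (H.neighborSet v) ≤ 2) ∧
  ∀ c : H.ConnectedComponent, Odd (Nat.card c.supp) →
    ∀ u v : V, u ∈ c.supp → v ∈ c.supp → u ≠ v →
      Nat.card (H.neighborSet u) = 1 → Nat.card (H.neighborSet v) = 1 → ¬ G.Adj u v

/-- A component of `H` is a cycle iff all its vertices have degree 2 in `H`. -/
def IsCycleComp {V : Type*} (H : SimpleGraph V) (c : H.ConnectedComponent) : Prop :=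
  ∀ v ∈ c.supp, Nat.card (H.neighborSet v) = 2

/-- An odd cycle component. -/
def OddCycleComp {V : Type*} (H : SimpleGraph V) (c : H.ConnectedComponent) : Prop :=
  Odd (Nat.card c.supp) ∧ IsCycleComp H c

/-- An odd path component (a component with an odd number of vertices containing
a degree-1 vertex). -/
def OddPathComp {V : Type*} (H : SimpleGraph V) (c : H.ConnectedComponent) : Prop :=
  Odd (Nat.card c.supp) ∧ ∃ v ∈ c.supp, Nat.card (H.neighborSet v) = 1

noncomputable def numComponents {V : Type*} (H : SimpleGraph V) : ℕ := Nat.card H.ConnectedComponent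

noncomputable def numOddCycles {V : Type*} (H : SimpleGraph V) : ℕ :=
  Nat.card {c : H.ConnectedComponent // OddCycleComp H c}

/-- `H` is a valid factor of `G` with the minimum number of components. -/
def MinimizesComponents {V : Type*} (G H : SimpleGraph V) : Prop :=
  IsValidFactor G H ∧ ∀ H' : SimpleGraph V, IsValidFactor G H' →
    numComponents H ≤ numComponents H'

/-- `H` is a valid factor of `G` minimizing the number of components and,
subject to that, the number of odd cycles. -/
def IsMinValidFactor {V : Type*} (G H : SimpleGraph V) : Prop :=
  MinimizesComponents G H ∧
  ∀ H' : SimpleGraph V, IsValidFactor G H' →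
    numComponents H' = numComponents H → numOddCycles H ≤ numOddCycles H'

/-- An external vertex of a factor: an endpoint of a path component, or a vertex
of an odd cycle component. -/
def ExternalVtx {V : Type*} (H : SimpleGraph V) (v : V) : Prop :=
  Nat.card (H.neighborSet v) = 1 ∨ OddCycleComp H (H.connectedComponentMk v)

/-!
The vertices of an odd cycle `C` of a minimal valid factor cannot be covered by one valid path, nor
those of `C` and another component `D` by one or two disjoint valid paths: the exchange would
destroy an odd cycle without adding a component. Hence every such attempt produces a path that is
not valid, that is, a single vertex or an odd path with adjacent ends.

Opening `C` at a vertex `x` and leaving along an edge `xy` of `G` into `D`, these parity constraints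
show in turn that `y` is not an end of a Hamiltonian path of `D`, so that `D` is not a cycle, and
that `y` cuts the path `D` into two pieces with an odd number of edges, so that `D` is an odd path.
If two vertices of `D` were attached to `C`, a Pósa rotation of `D` would move one of them to a
position of the wrong parity; a single vertex of `D` has only one edge leaving `D`. Finally, if `C`
had a chord, rotations would propagate it to a chord at every vertex, that is, to a perfect matching
of the odd set of vertices of `C`.
-/

section Splicing

variable {V : Type*} {G H F K : SimpleGraph V} {S T : Set V} {u v : V}

/-- `S` is a union of connected components of `H`: no edge of `H` leaves it. -/
def AdjClosed (H : SimpleGraph V) (S : Set V) : Prop :=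
  ∀ ⦃u⦄, u ∈ S → ∀ ⦃v⦄, H.Adj u v → v ∈ S

lemma AdjClosed.mem_of_reachable (hS : AdjClosed H S) (hu : u ∈ S) (huv : H.Reachable u v) :
    v ∈ S := by
  obtain ⟨p⟩ := huv
  induction p with
  | nil => exact hu
  | cons h _ ih => exact ih (hS hu h)

lemma AdjClosed.compl (hS : AdjClosed H S) : AdjClosed H Sᶜ :=
  fun _ hu _ huv hv => hu (hS hv huv.symm)

lemma AdjClosed.union (hS : AdjClosed H S) (hT : AdjClosed H T) : AdjClosed H (S ∪ T) :=
  fun _ hu _ huv => hu.imp (hS · huv) (hT · huv)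

lemma adjClosed_supp (c : H.ConnectedComponent) : AdjClosed H c.supp :=
  fun _ hu _ huv => c.mem_supp_of_adj_mem_supp hu huv

/-- `H` and `K` have the same edges at every vertex of `T`, and none of these edges leaves `T`;
thus `H` and `K` have the same components inside `T`. -/
structure AgreeOn (H K : SimpleGraph V) (T : Set V) : Prop where
  adj_iff : ∀ ⦃u⦄, u ∈ T → ∀ v, H.Adj u v ↔ K.Adj u v
  adjClosed : AdjClosed H T

namespace AgreeOn

lemma symm (h : AgreeOn H K T) : AgreeOn K H T where
  adj_iff _ hu v := (h.adj_iff hu v).symm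
  adjClosed _ hu v huv := h.adjClosed hu ((h.adj_iff hu v).mpr huv)

lemma neighborSet_eq (h : AgreeOn H K T) (hu : u ∈ T) : H.neighborSet u = K.neighborSet u :=
  Set.ext (h.adj_iff hu)

lemma reachable (h : AgreeOn H K T) (hu : u ∈ T) (huv : H.Reachable u v) : K.Reachable u v := by
  obtain ⟨p⟩ := huv
  induction p with
  | nil => exact .rfl
  | cons huw _ ih => exact ((h.adj_iff hu _).mp huw).reachable.trans (ih (h.adjClosed hu huw))

lemma supp_eq (h : AgreeOn H K T) (hu : u ∈ T) :
    (H.connectedComponentMk u).supp = (K.connectedComponentMk u).supp := by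
  ext v
  simp only [ConnectedComponent.mem_supp_iff, ConnectedComponent.eq]
  exact ⟨fun hv => (h.reachable hu hv.symm).symm, fun hv => (h.symm.reachable hu hv.symm).symm⟩

lemma oddCycleComp (h : AgreeOn H K T) (hu : u ∈ T)
    (hodd : OddCycleComp H (H.connectedComponentMk u)) :
    OddCycleComp K (K.connectedComponentMk u) := by
  refine ⟨h.supp_eq hu ▸ hodd.1, fun v hv => ?_⟩
  rw [← h.supp_eq hu] at hv
  have hvT : v ∈ T := h.adjClosed.mem_of_reachable hu (ConnectedComponent.exact hv).symm
  rw [← h.neighborSet_eq hvT]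
  exact hodd.2 v hv

end AgreeOn

/-- The vertex-local form of `IsValidFactor G H`: the conditions concerning the vertex `u` and the
component of `H` containing it. -/
structure IsValidAt (G H : SimpleGraph V) (u : V) : Prop where
  neighborSet_subset : H.neighborSet u ⊆ G.neighborSet u
  one_le_card : 1 ≤ Nat.card (H.neighborSet u)
  card_le_two : Nat.card (H.neighborSet u) ≤ 2
  not_adj : Odd (Nat.card (H.connectedComponentMk u).supp) → Nat.card (H.neighborSet u) = 1 →
    ∀ v, H.Reachable u v → u ≠ v → Nat.card (H.neighborSet v) = 1 → ¬ G.Adj u v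

lemma isValidFactor_iff_forall_isValidAt : IsValidFactor G H ↔ ∀ u, IsValidAt G H u := by
  constructor
  · rintro ⟨hle, hdeg, hodd⟩ u
    exact ⟨fun _ huv => hle huv, (hdeg u).1, (hdeg u).2, fun hu hu1 v huv hne hv1 =>
      hodd _ hu u v rfl (ConnectedComponent.sound huv.symm) hne hu1 hv1⟩
  · refine fun h => ⟨fun _ _ huv => (h _).neighborSet_subset huv,
      fun u => ⟨(h u).one_le_card, (h u).card_le_two⟩, ?_⟩
    rintro c hc u v rfl hv hne hu1 hv1
    exact (h u).not_adj hc hu1 v (ConnectedComponent.exact hv).symm hne hv1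

lemma AgreeOn.isValidAt (h : AgreeOn H K T) (hu : u ∈ T) (hH : IsValidAt G H u) :
    IsValidAt G K u := by
  have hnbr := h.neighborSet_eq hu
  refine ⟨hnbr ▸ hH.neighborSet_subset, hnbr ▸ hH.one_le_card, hnbr ▸ hH.card_le_two,
    fun hodd hu1 v huv hne hv1 => ?_⟩
  have huv' := h.symm.reachable hu huv
  have hv : v ∈ T := h.adjClosed.mem_of_reachable hu huv'
  exact hH.not_adj (h.supp_eq hu ▸ hodd) (hnbr ▸ hu1) v huv' hne (h.neighborSet_eq hv ▸ hv1)

/-- The graph that looks like `F` inside `S` and like `H` outside `S`. -/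
def splice (F H : SimpleGraph V) (S : Set V) : SimpleGraph V where
  Adj u v := F.Adj u v ∧ u ∈ S ∧ v ∈ S ∨ H.Adj u v ∧ u ∉ S ∧ v ∉ S
  symm.symm _ _ := Or.imp (fun h => ⟨h.1.symm, h.2.symm⟩) (fun h => ⟨h.1.symm, h.2.symm⟩)
  loopless := ⟨fun _ h => h.elim (fun h => F.irrefl h.1) (fun h => H.irrefl h.1)⟩

lemma AdjClosed.agreeOn_splice_left (hF : AdjClosed F S) : AgreeOn F (splice F H S) S where
  adj_iff _ hu _ := ⟨fun huv => .inl ⟨huv, hu, hF hu huv⟩, fun h => by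
    rcases h with h | h
    exacts [h.1, absurd hu h.2.1]⟩
  adjClosed := hF

lemma AdjClosed.agreeOn_splice_right (hH : AdjClosed H T) (hST : Disjoint S T) :
    AgreeOn H (splice F H S) T where
  adj_iff _ hu _ := ⟨fun huv => .inr
    ⟨huv, hST.notMem_of_mem_right hu, hST.notMem_of_mem_right (hH hu huv)⟩, fun h => by
    rcases h with h | h
    exacts [absurd h.2.1 (hST.notMem_of_mem_right hu), h.1]⟩
  adjClosed := hH

end Splicing

section Replacement

variable {V : Type*} {G H F F' : SimpleGraph V} {S T : Set V}

/-- Inside `S`, the graph `F` is a valid factor of `G` all of whose components are paths, and no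
edge of `F` leaves `S`. -/
structure IsPathFactorOn (G F : SimpleGraph V) (S : Set V) : Prop where
  adjClosed : AdjClosed F S
  isValidAt : ∀ u ∈ S, IsValidAt G F u
  exists_endpoint : ∀ u ∈ S, ∃ v, F.Reachable u v ∧ Nat.card (F.neighborSet v) = 1

lemma AgreeOn.isPathFactorOn (h : AgreeOn F F' S) (hF : IsPathFactorOn G F S) :
    IsPathFactorOn G F' S where
  adjClosed := h.symm.adjClosed
  isValidAt _ hu := h.isValidAt hu (hF.isValidAt _ hu)
  exists_endpoint u hu := by
    obtain ⟨v, huv, hv⟩ := hF.exists_endpoint u hu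
    exact ⟨v, h.reachable hu huv, h.neighborSet_eq (hF.adjClosed.mem_of_reachable hu huv) ▸ hv⟩

lemma IsPathFactorOn.splice (hF : IsPathFactorOn G F S) (hF' : IsPathFactorOn G F' T)
    (hST : Disjoint S T) : IsPathFactorOn G (splice F F' S) (S ∪ T) := by
  have hS := hF.adjClosed.agreeOn_splice_left (H := F') |>.isPathFactorOn hF
  have hT := hF'.adjClosed.agreeOn_splice_right (F := F) hST |>.isPathFactorOn hF'
  exact ⟨hS.adjClosed.union hT.adjClosed,
    fun u hu => hu.elim (hS.isValidAt u) (hT.isValidAt u),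
    fun u hu => hu.elim (hS.exists_endpoint u) (hT.exists_endpoint u)⟩

lemma IsMinValidFactor.numOddCycles_le (hmin : IsMinValidFactor G H) (hF : IsValidFactor G F)
    (hle : numComponents F ≤ numComponents H) : numOddCycles H ≤ numOddCycles F :=
  hmin.2 F hF (hle.antisymm (hmin.1.2 F hF))

lemma isValidFactor_splice (hH : IsValidFactor G H) (hS : AdjClosed H S)
    (hF : IsPathFactorOn G F S) : IsValidFactor G (splice F H S) := by
  rw [isValidFactor_iff_forall_isValidAt] at hH ⊢
  intro u
  by_cases hu : u ∈ S
  · exact hF.adjClosed.agreeOn_splice_left.isValidAt hu (hF.isValidAt u hu)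
  · exact (hS.compl.agreeOn_splice_right disjoint_compl_right).isValidAt hu (hH u)

/-- By `hr`, every component of `F` inside `S` contains `r c` for some component `c` of `H` inside
`S`, so `F` has at most as many components there as `H`. -/
lemma numComponents_splice_le [Finite V] (hS : AdjClosed H S) (hF : AdjClosed F S)
    (r : H.ConnectedComponent → V)
    (hr : ∀ w ∈ S, ∃ c, c.supp ⊆ S ∧ F.Reachable w (r c)) :
    numComponents (splice F H S) ≤ numComponents H := by
  classical
  let f (c : H.ConnectedComponent) : (splice F H S).ConnectedComponent :=
    connectedComponentMk _ (if c.supp ⊆ S then r c else c.out)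
  refine Nat.card_le_card_of_surjective f fun c' => ?_
  induction c' using ConnectedComponent.ind with | h w =>
  by_cases hw : w ∈ S
  · obtain ⟨c, hcS, hc⟩ := hr w hw
    refine ⟨c, ?_⟩
    simp only [f, if_pos hcS]
    exact (ConnectedComponent.sound (hF.agreeOn_splice_left.reachable hw hc)).symm
  · have hcS : ¬ (H.connectedComponentMk w).supp ⊆ S := fun h => hw (h rfl)
    have hc : H.Reachable w (H.connectedComponentMk w).out :=
      ConnectedComponent.exact (Quot.out_eq (H.connectedComponentMk w)).symm
    refine ⟨H.connectedComponentMk w, ?_⟩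
    simp only [f, if_neg hcS]
    exact (ConnectedComponent.sound
      ((hS.compl.agreeOn_splice_right disjoint_compl_right).reachable hw hc)).symm

lemma numOddCycles_splice_lt [Finite V] (hS : AdjClosed H S) (hF : IsPathFactorOn G F S)
    {C : H.ConnectedComponent} (hC : OddCycleComp H C) (hCS : C.supp ⊆ S) :
    numOddCycles (splice F H S) < numOddCycles H := by
  have hagree : AgreeOn H (splice F H S) Sᶜ :=
    hS.compl.agreeOn_splice_right disjoint_compl_right
  have hmk (c : (splice F H S).ConnectedComponent) : connectedComponentMk _ c.out = c :=
    Quot.out_eq c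
  have hout : ∀ c, OddCycleComp (splice F H S) c → c.out ∈ Sᶜ := fun c hc hcS => by
    obtain ⟨v, hv, hv1⟩ :=
      (hF.adjClosed.agreeOn_splice_left (H := H) |>.isPathFactorOn hF).exists_endpoint _ hcS
    have := hc.2 v ((ConnectedComponent.sound hv.symm).trans (hmk c))
    omega
  let f (c : {c // OddCycleComp (splice F H S) c}) : {c // OddCycleComp H c} :=
    ⟨H.connectedComponentMk c.1.out,
      hagree.symm.oddCycleComp (hout c c.2) ((hmk c.1).symm ▸ c.2)⟩
  have hf : f.Injective := fun c c' h => Subtype.ext <| by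
    rw [← hmk c.1, ← hmk c'.1]
    exact ConnectedComponent.sound
      (hagree.reachable (hout c c.2) (ConnectedComponent.exact (Subtype.ext_iff.mp h)))
  have hCf : ⟨C, hC⟩ ∉ Set.range f := by
    rintro ⟨c, hc⟩
    exact hout c c.2 (hCS (Subtype.ext_iff.mp hc))
  have := Fintype.ofFinite {c // OddCycleComp (splice F H S) c}
  have := Fintype.ofFinite {c // OddCycleComp H c}
  simpa only [numOddCycles, Nat.card_eq_fintype_card]
    using Fintype.card_lt_of_injective_of_notMem f hf hCf

theorem IsMinValidFactor.not_isPathFactorOn [Finite V] (hmin : IsMinValidFactor G H)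
    {C : H.ConnectedComponent} (hC : OddCycleComp H C) (hS : AdjClosed H S) (hCS : C.supp ⊆ S)
    (r : H.ConnectedComponent → V)
    (hr : ∀ w ∈ S, ∃ c, c.supp ⊆ S ∧ F.Reachable w (r c)) : ¬ IsPathFactorOn G F S := fun hF =>
  (numOddCycles_splice_lt hS hF hC hCS).not_ge <|
    hmin.numOddCycles_le (isValidFactor_splice hmin.1.1 hS hF)
      (numComponents_splice_le hS hF.adjClosed r hr)

end Replacement

section ValidPath

variable {V : Type*} {G : SimpleGraph V} {u v w : V}

lemma ncard_neighborSet_toSubgraph_of_ne_ends {p : G.Walk u v} (hp : p.IsPath)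
    (hw : w ∈ p.support) (hu : w ≠ u) (hv : w ≠ v) : (p.toSubgraph.neighborSet w).ncard = 2 := by
  obtain ⟨i, rfl, hi⟩ := Walk.mem_support_iff_exists_getVert.mp hw
  refine hp.ncard_neighborSet_toSubgraph_internal_eq_two ?_ (hi.lt_of_ne ?_)
  · rintro rfl
    exact hu p.getVert_zero
  · rintro rfl
    exact hv p.getVert_length

lemma card_setOf_mem_support {p : G.Walk u v} (hp : p.IsPath) :
    Nat.card {w | w ∈ p.support} = p.length + 1 := by
  classical
  have : {w | w ∈ p.support} = (p.support.toFinset : Set V) := by ext; simp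
  rw [this, Nat.card_coe_set_eq, Set.ncard_coe_finset, List.toFinset_card_of_nodup hp.support_nodup,
    p.length_support]

lemma reachable_spanningCoe_toSubgraph (p : G.Walk u v) (hw : w ∈ p.support) :
    p.toSubgraph.spanningCoe.Reachable w u :=
  (p.toSubgraph_connected.coe.preconnected ⟨w, p.mem_verts_toSubgraph.mpr hw⟩
    ⟨u, p.start_mem_verts_toSubgraph⟩).map ⟨Subtype.val, id⟩

lemma adjClosed_spanningCoe_toSubgraph (p : G.Walk u v) :
    AdjClosed p.toSubgraph.spanningCoe {w | w ∈ p.support} :=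
  fun _ _ _ h => p.mem_support_of_adj_toSubgraph h.symm

lemma supp_mk_spanningCoe_toSubgraph (p : G.Walk u v) (hw : w ∈ p.support) :
    (p.toSubgraph.spanningCoe.connectedComponentMk w).supp = {x | x ∈ p.support} := by
  ext x
  refine ⟨fun hx => ?_, fun hx => ConnectedComponent.sound ?_⟩
  · exact (adjClosed_spanningCoe_toSubgraph p).mem_of_reachable hw
      (ConnectedComponent.exact hx).symm
  · exact (reachable_spanningCoe_toSubgraph p hx).trans
      (reachable_spanningCoe_toSubgraph p hw).symm

/-- A path of `G` that can serve as a component of a valid factor of `G`. -/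
structure IsValidPath {G : SimpleGraph V} {u v : V} (p : G.Walk u v) : Prop where
  isPath : p.IsPath
  not_nil : ¬ p.Nil
  not_adj : Even p.length → ¬ G.Adj u v

lemma IsValidPath.isPathFactorOn {p : G.Walk u v} (hp : IsValidPath p) :
    IsPathFactorOn G p.toSubgraph.spanningCoe {w | w ∈ p.support} := by
  have hstart : Nat.card (p.toSubgraph.neighborSet u) = 1 := by
    simp [hp.isPath.neighborSet_toSubgraph_startpoint hp.not_nil]
  have hend : Nat.card (p.toSubgraph.neighborSet v) = 1 := by
    simp [hp.isPath.neighborSet_toSubgraph_endpoint hp.not_nil]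
  have hmid {w : V} (hw : w ∈ p.support) (hu : w ≠ u) (hv : w ≠ v) :
      Nat.card (p.toSubgraph.neighborSet w) = 2 :=
    ncard_neighborSet_toSubgraph_of_ne_ends hp.isPath hw hu hv
  have hend_of_card {w : V} (hw : w ∈ p.support) (h : Nat.card (p.toSubgraph.neighborSet w) = 1) :
      w = u ∨ w = v := by
    by_contra! hne
    have := hmid hw hne.1 hne.2
    omega
  have hcard {w : V} (hw : w ∈ p.support) : 1 ≤ Nat.card (p.toSubgraph.neighborSet w) ∧
      Nat.card (p.toSubgraph.neighborSet w) ≤ 2 := by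
    by_cases hu : w = u
    · subst hu; omega
    by_cases hv : w = v
    · subst hv; omega
    rw [hmid hw hu hv]
    omega
  have hsupp {w : V} (hw : w ∈ p.support) := supp_mk_spanningCoe_toSubgraph p hw
  refine ⟨adjClosed_spanningCoe_toSubgraph p, fun w hw => ?_,
    fun w hw => ⟨u, reachable_spanningCoe_toSubgraph p hw, hstart⟩⟩
  refine ⟨fun x hx => p.toSubgraph.adj_sub hx, (hcard hw).1, (hcard hw).2,
    fun hodd hw1 x hwx hne hx1 => ?_⟩
  have hx : x ∈ p.support := (hsupp hw).subset (ConnectedComponent.sound hwx.symm)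
  have hnadj : ¬ G.Adj u v := by
    refine hp.not_adj ?_
    rwa [hsupp hw, card_setOf_mem_support hp.isPath, Nat.odd_add_one, Nat.not_odd_iff_even] at hodd
  rcases hend_of_card hw hw1 with rfl | rfl <;> rcases hend_of_card hx hx1 with rfl | rfl
  exacts [absurd rfl hne, hnadj, fun h => hnadj h.symm, absurd rfl hne]

lemma nil_or_even_length_and_adj_of_not_isValidPath {p : G.Walk u v} (hp : p.IsPath)
    (hpv : ¬ IsValidPath p) : p.Nil ∨ Even p.length ∧ G.Adj u v := by
  by_contra! h
  exact hpv ⟨hp, h.1, h.2⟩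

end ValidPath

section SpanningPath

variable {V : Type*} {G H : SimpleGraph V} {S T : Set V} {a b c d u v w : V}

lemma support_append_cons (p : G.Walk u v) (h : G.Adj v a) (q : G.Walk a b) :
    (p.append (.cons h q)).support = p.support ++ q.support := by
  rw [Walk.support_append, Walk.support_cons, List.tail_cons]

lemma disjoint_support_of_isPath_append_cons {p : G.Walk u v} {h : G.Adj v a} {q : G.Walk a b}
    (hpq : (p.append (.cons h q)).IsPath) :
    Disjoint {w | w ∈ p.support} {w | w ∈ q.support} := by
  have hnodup := hpq.support_nodup
  rw [support_append_cons] at hnodup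
  exact Set.disjoint_left.mpr fun w hwp hwq => List.disjoint_of_nodup_append hnodup hwp hwq

/-- `p` is a path whose vertices are exactly the elements of `S`. -/
structure IsSpanningPath {G : SimpleGraph V} {u v : V} (p : G.Walk u v) (S : Set V) : Prop where
  isPath : p.IsPath
  setOf_mem_support : {w | w ∈ p.support} = S

namespace IsSpanningPath

lemma mem_support_iff {p : G.Walk u v} (hp : IsSpanningPath p S) : w ∈ p.support ↔ w ∈ S :=
  Set.ext_iff.mp hp.setOf_mem_support w

lemma card_eq {p : G.Walk u v} (hp : IsSpanningPath p S) : Nat.card S = p.length + 1 :=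
  hp.setOf_mem_support ▸ card_setOf_mem_support hp.isPath

lemma of_perm {p : G.Walk u v} {q : G.Walk a b} (hp : IsSpanningPath p S)
    (hqp : q.support.Perm p.support) : IsSpanningPath q S where
  isPath := .mk' (hqp.nodup_iff.mpr hp.isPath.support_nodup)
  setOf_mem_support := by
    rw [← hp.setOf_mem_support]
    exact Set.ext fun _ => hqp.mem_iff

lemma reverse {p : G.Walk u v} (hp : IsSpanningPath p S) : IsSpanningPath p.reverse S :=
  hp.of_perm (p.support_reverse ▸ p.support.reverse_perm)

lemma mapLe {p : H.Walk u v} (hp : IsSpanningPath p S) (hHG : H ≤ G) :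
    IsSpanningPath (p.mapLe hHG) S where
  isPath := (Walk.isPath_mapLe hHG).mpr hp.isPath
  setOf_mem_support := by rw [Walk.support_mapLe_eq_support, hp.setOf_mem_support]

lemma append_cons {p : G.Walk u v} {q : G.Walk a b} (hp : IsSpanningPath p S)
    (hq : IsSpanningPath q T) (hST : Disjoint S T) (h : G.Adj v a) :
    IsSpanningPath (p.append (.cons h q)) (S ∪ T) := by
  constructor
  · refine .mk' ?_
    rw [support_append_cons]
    refine hp.isPath.support_nodup.append hq.isPath.support_nodup ?_
    exact fun w hwp hwq => hST.notMem_of_mem_left (hp.mem_support_iff.mp hwp)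
      (hq.mem_support_iff.mp hwq)
  · ext w
    rw [Set.mem_ofPred_eq, support_append_cons, List.mem_append, hp.mem_support_iff,
      hq.mem_support_iff, Set.mem_union]

lemma posa_rotation {p : G.Walk a b} {hbc : G.Adj b c} {q : G.Walk c d}
    (hpq : IsSpanningPath (p.append (.cons hbc q)) S) (hbd : G.Adj b d) :
    IsSpanningPath (p.append (.cons hbd q.reverse)) S :=
  hpq.of_perm <| by
    rw [support_append_cons, support_append_cons, Walk.support_reverse]
    exact q.support.reverse_perm.append_left _

end IsSpanningPath

lemma adjClosed_support_of_isPath_of_forall_length_le [Finite V]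
    (hdeg : ∀ v, Nat.card (H.neighborSet v) ≤ 2) {p : H.Walk a d} (hp : p.IsPath)
    (hmax : ∀ (u v : V) (q : H.Walk u v), q.IsPath → H.Reachable a u → q.length ≤ p.length) :
    AdjClosed H {w | w ∈ p.support} := by
  intro w hw z hwz
  by_contra hz
  by_cases hwa : w = a
  · subst hwa
    have := hmax _ _ _ (hp.cons hz (h := hwz.symm)) hwz.reachable
    rw [Walk.length_cons] at this
    omega
  by_cases hwd : w = d
  · subst hwd
    have := hmax _ _ _ (hp.concat hz hwz) .rfl
    rw [Walk.length_concat] at this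
    omega
  have hcard := ncard_neighborSet_toSubgraph_of_ne_ends hp hw hwa hwd
  have hnbr : p.toSubgraph.neighborSet w = H.neighborSet w :=
    Set.eq_of_subset_of_ncard_le (p.toSubgraph.neighborSet_subset w) (hcard ▸ hdeg w)
  exact hz (p.mem_support_of_adj_toSubgraph (hnbr.superset hwz).symm)

lemma exists_isSpanningPath [Finite V] (hdeg : ∀ v, Nat.card (H.neighborSet v) ≤ 2)
    (c : H.ConnectedComponent) :
    ∃ (a d : V) (p : H.Walk a d), IsSpanningPath p c.supp := by
  have := Fintype.ofFinite V
  classical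
  let lengths := {n | ∃ a ∈ c.supp, ∃ (d : V) (p : H.Walk a d), p.IsPath ∧ p.length = n}
  have hbdd : BddAbove lengths := by
    refine ⟨Fintype.card V, ?_⟩
    rintro _ ⟨_, _, _, p, hp, rfl⟩
    exact hp.length_lt.le
  have hne : lengths.Nonempty := by
    obtain ⟨a, ha⟩ := c.nonempty_supp
    exact ⟨0, a, ha, a, .nil, .nil, rfl⟩
  obtain ⟨a, ha, d, p, hp, hpmax⟩ := Nat.sSup_mem hne hbdd
  have hreach {w : V} : w ∈ c.supp ↔ H.Reachable a w := by
    rw [← ha, ConnectedComponent.mem_supp_iff, ConnectedComponent.eq, reachable_comm]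
  have hclosed : AdjClosed H {w | w ∈ p.support} :=
    adjClosed_support_of_isPath_of_forall_length_le hdeg hp fun u v q hq hau =>
      hpmax ▸ le_csSup hbdd ⟨u, hreach.mpr hau, v, q, hq, rfl⟩
  refine ⟨a, d, p, hp, Set.Subset.antisymm (fun w hw => ?_) fun w hw => ?_⟩
  · exact hreach.mpr (p.takeUntil w hw).reachable
  · exact hclosed.mem_of_reachable p.start_mem_support (hreach.mp hw)

lemma IsCycleComp.exists_isSpanningPath_of_adj [Finite V] {C : H.ConnectedComponent}
    (hC : IsCycleComp H C) (hu : u ∈ C.supp) (huv : H.Adj u v) :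
    ∃ p : H.Walk v u, IsSpanningPath p C.supp := by
  classical
  have := Fintype.ofFinite V
  let K := C.toSimpleGraph.spanningCoe
  have hadj (x y : V) : K.Adj x y ↔ x ∈ C.supp ∧ H.Adj x y := C.adj_spanningCoe_toSimpleGraph
  have hagree : AgreeOn H K C.supp :=
    ⟨fun x hx y => by rw [hadj, and_iff_right hx], adjClosed_supp C⟩
  have hcycles : K.IsCycles := fun x ⟨y, hxy⟩ => by
    have hx := ((hadj x y).mp hxy).1
    rw [← hagree.neighborSet_eq hx]
    exact hC x hx
  have huvK : K.Adj u v := (hagree.adj_iff hu v).mp huv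
  obtain ⟨p, hp, hverts⟩ := hcycles.exists_cycle_toSubgraph_verts_eq_connectedComponentSupp
    (c := K.connectedComponentMk u) rfl ⟨v, huvK⟩
  obtain ⟨q, hq, rfl, hqp⟩ := hp.exists_isCycle_snd_verts_eq
    ((hp.adj_toSubgraph_iff_of_isCycles hcycles p.start_mem_verts_toSubgraph v).mpr huvK)
  have hspan : IsSpanningPath q.tail C.supp := by
    refine ⟨hq.isPath_tail, ?_⟩
    rw [← (ConnectedComponent.mem_supp_iff C u).mp hu, hagree.supp_eq hu, ← hverts, ← hqp]
    ext x
    rw [Walk.mem_verts_toSubgraph, ← Walk.cons_support_tail hq.not_nil, List.mem_cons]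
    exact ⟨.inr, Or.rec (· ▸ q.tail.end_mem_support) id⟩
  exact ⟨_, hspan.mapLe fun x y hxy => ((hadj x y).mp hxy).2⟩

lemma eq_of_adj_of_notMem {A : Set V} (hG : Nat.card (G.neighborSet v) = 3)
    (hA : A ⊆ G.neighborSet v) (hA2 : A.ncard = 2) (hva : G.Adj v a) (ha : a ∉ A)
    (hvb : G.Adj v b) (hb : b ∉ A) : a = b := by
  by_contra hab
  have hfin : (G.neighborSet v).Finite := Set.finite_of_ncard_pos (by
    rw [← Nat.card_coe_set_eq, hG]; norm_num)
  have hAfin := hfin.subset hA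
  have hle : (insert a (insert b A)).ncard ≤ (G.neighborSet v).ncard :=
    Set.ncard_le_ncard (Set.insert_subset hva (Set.insert_subset hvb hA)) hfin
  rw [Set.ncard_insert_of_notMem (by simp [hab, ha]) (hAfin.insert b),
    Set.ncard_insert_of_notMem hb hAfin, hA2, ← Nat.card_coe_set_eq, hG] at hle
  omega

end SpanningPath


section Surgery

variable {V : Type*} {G H : SimpleGraph V} {C D : H.ConnectedComponent} {S T : Set V}
  {a b c d u v w x x' y z : V}

lemma disjoint_supp_of_ne (h : C ≠ D) : Disjoint C.supp D.supp :=
  Set.disjoint_left.mpr fun _ hC hD => h (hC.symm.trans hD)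

lemma OddCycleComp.exists_adj (hC : OddCycleComp H C) (hx : x ∈ C.supp) : ∃ x', H.Adj x x' :=
  Set.nonempty_of_ncard_ne_zero (s := H.neighborSet x) ((hC.2 x hx).trans_ne two_ne_zero)

lemma OddCycleComp.exists_isSpanningPath [Finite V] (hC : OddCycleComp H C) (hHG : H ≤ G)
    (hx : x ∈ C.supp) (hxx' : H.Adj x x') :
    ∃ p : G.Walk x' x, IsSpanningPath p C.supp ∧ Even p.length := by
  obtain ⟨p, hp⟩ := hC.2.exists_isSpanningPath_of_adj hx hxx'
  have hp' := hp.mapLe hHG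
  refine ⟨_, hp', ?_⟩
  have hodd := hC.1
  rwa [hp'.card_eq, Nat.odd_add_one, Nat.not_odd_iff_even] at hodd

lemma alternate_along_walk {P Q : V → Prop} (hPQ : ∀ u v, H.Adj u v → P u → Q v)
    (hQP : ∀ u v, H.Adj u v → Q u → P v) (p : H.Walk u v) (hu : P u) :
    (Even p.length → P v) ∧ (Odd p.length → Q v) := by
  induction p generalizing P Q with
  | nil => simpa using hu
  | cons h p ih =>
    obtain ⟨hQ, hP⟩ := ih hQP hPQ (hPQ _ _ h hu)
    rw [Walk.length_cons, Nat.even_add_one, Nat.not_even_iff_odd, Nat.odd_add_one,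
      Nat.not_odd_iff_even]
    exact ⟨hP, hQ⟩

namespace IsMinValidFactor

lemma le (hmin : IsMinValidFactor G H) : H ≤ G := hmin.1.1.1

lemma exists_isSpanningPath [Finite V] (hmin : IsMinValidFactor G H) (D : H.ConnectedComponent) :
    ∃ (a d : V) (p : G.Walk a d), IsSpanningPath p D.supp := by
  obtain ⟨a, d, p, hp⟩ := _root_.exists_isSpanningPath (fun v => (hmin.1.1.2.1 v).2) D
  exact ⟨a, d, _, hp.mapLe hmin.le⟩

lemma even_length_and_adj [Finite V] (hmin : IsMinValidFactor G H) (hC : OddCycleComp H C)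
    {p : G.Walk u v} (hp : IsSpanningPath p (C.supp ∪ D.supp)) : Even p.length ∧ G.Adj u v := by
  have hnil : ¬ p.Nil := fun hnil => by
    obtain ⟨x, hx⟩ := C.nonempty_supp
    obtain ⟨x', hxx'⟩ := hC.exists_adj hx
    have hmem {w : V} (hw : w ∈ C.supp) : w = u := by
      simpa [Walk.nil_iff_support_eq.mp hnil] using hp.mem_support_iff.mpr (.inl hw)
    exact hxx'.ne ((hmem hx).trans (hmem (C.mem_supp_of_adj_mem_supp hx hxx')).symm)
  refine (nil_or_even_length_and_adj_of_not_isValidPath hp.isPath fun hpv => ?_).resolve_left hnil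
  refine hmin.not_isPathFactorOn hC ((adjClosed_supp C).union (adjClosed_supp D))
    Set.subset_union_left (fun _ => u) (fun w hw => ⟨C, Set.subset_union_left, ?_⟩)
    (hp.setOf_mem_support ▸ hpv.isPathFactorOn)
  exact reachable_spanningCoe_toSubgraph p (hp.mem_support_iff.mpr hw)

lemma not_isValidPath_of_disjoint [Finite V] (hmin : IsMinValidFactor G H)
    (hC : OddCycleComp H C) (hDC : D ≠ C) {p : G.Walk a b} {q : G.Walk c d}
    (hp : IsSpanningPath p S) (hq : IsSpanningPath q T) (hST : Disjoint S T)
    (hunion : S ∪ T = C.supp ∪ D.supp) (hpv : IsValidPath p) : ¬ IsValidPath q := by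
  classical
  intro hqv
  have hpF := hp.setOf_mem_support ▸ hpv.isPathFactorOn
  have hqF := hq.setOf_mem_support ▸ hqv.isPathFactorOn
  refine hmin.not_isPathFactorOn hC ((adjClosed_supp C).union (adjClosed_supp D))
    Set.subset_union_left (fun E => if E = C then a else c) (fun w hw => ?_)
    (hunion ▸ hpF.splice hqF hST)
  rw [← hunion] at hw
  rcases hw with hw | hw
  · refine ⟨C, Set.subset_union_left, ?_⟩
    rw [if_pos rfl]
    exact hpF.adjClosed.agreeOn_splice_left.reachable hw
      (reachable_spanningCoe_toSubgraph p (hp.mem_support_iff.mpr hw))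
  · refine ⟨D, Set.subset_union_right, ?_⟩
    rw [if_neg hDC]
    exact (hqF.adjClosed.agreeOn_splice_right hST).reachable hw
      (reachable_spanningCoe_toSubgraph q (hq.mem_support_iff.mpr hw))

lemma odd_length_and_adj_of_adj_start [Finite V] (hmin : IsMinValidFactor G H)
    (hC : OddCycleComp H C) (hDC : D ≠ C) {q : G.Walk y z} (hq : IsSpanningPath q D.supp)
    (hx : x ∈ C.supp) (hxx' : H.Adj x x') (hxy : G.Adj x y) : Odd q.length ∧ G.Adj x' z := by
  obtain ⟨p, hp, hpeven⟩ := hC.exists_isSpanningPath hmin.le hx hxx'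
  obtain ⟨heven, hadj⟩ :=
    hmin.even_length_and_adj hC (hp.append_cons hq (disjoint_supp_of_ne hDC.symm) hxy)
  refine ⟨?_, hadj⟩
  rw [Walk.length_append, Walk.length_cons] at heven
  grind

/-- Otherwise every second vertex of `C` is adjacent to `y` and the others to `z`. As `C` is odd,
going once around it shows that `x` is adjacent to both, which leaves `x` two edges of `G`
outside `H`. -/
lemma not_adj_start_of_isSpanningPath [Fintype V] (hmin : IsMinValidFactor G H)
    (hG : IsCubic G) (hC : OddCycleComp H C) (hDC : D ≠ C) {q : G.Walk y z}
    (hq : IsSpanningPath q D.supp) (hx : x ∈ C.supp) : ¬ G.Adj x y := by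
  intro hxy
  obtain ⟨x', hxx'⟩ := hC.exists_adj hx
  have hodd : Odd q.length := (hmin.odd_length_and_adj_of_adj_start hC hDC hq hx hxx' hxy).1
  have hyz_alt (u v : V) (huv : H.Adj u v) (hu : u ∈ C.supp ∧ G.Adj u y) :
      v ∈ C.supp ∧ G.Adj v z :=
    ⟨adjClosed_supp C hu.1 huv,
      (hmin.odd_length_and_adj_of_adj_start hC hDC hq hu.1 huv hu.2).2⟩
  have hzy_alt (u v : V) (huv : H.Adj u v) (hu : u ∈ C.supp ∧ G.Adj u z) :
      v ∈ C.supp ∧ G.Adj v y :=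
    ⟨adjClosed_supp C hu.1 huv,
      (hmin.odd_length_and_adj_of_adj_start hC hDC hq.reverse hu.1 huv hu.2).2⟩
  have hxz : G.Adj x z := by
    obtain ⟨p, hp⟩ := hC.2.exists_isSpanningPath_of_adj hx hxx'
    have hpcard := hp.card_eq
    refine ((alternate_along_walk hyz_alt hzy_alt (.cons hxx' p) ⟨hx, hxy⟩).2 ?_).2
    rw [Walk.length_cons, ← hpcard]
    exact hC.1
  have hnotH {w : V} (hw : w ∈ q.support) : w ∉ H.neighborSet x := fun hxw =>
    hDC ((hq.mem_support_iff.mp hw).symm.trans (adjClosed_supp C hx hxw))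
  have hyz : y = z := eq_of_adj_of_notMem (hG x) (fun _ h => hmin.le h) (hC.2 x hx) hxy
    (hnotH q.start_mem_support) hxz (hnotH q.end_mem_support)
  subst hyz
  rw [Walk.length_eq_zero_iff.mpr (Walk.isPath_iff_nil.mp hq.isPath)] at hodd
  exact Nat.not_odd_zero hodd

/-- Opening `C` at `x` and attaching `p` gives a valid path, as its ends `x'` and `a` are not
adjacent, so the remaining path `q` cannot be valid. -/
lemma even_length_and_eq_or_adj_of_append_cons [Fintype V] (hmin : IsMinValidFactor G H)
    (hG : IsCubic G) (hC : OddCycleComp H C) (hDC : D ≠ C) {p : G.Walk a y} {hyb : G.Adj y b}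
    {q : G.Walk b d} (hpq : IsSpanningPath (p.append (.cons hyb q)) D.supp) (hx : x ∈ C.supp)
    (hxy : G.Adj x y) : Even q.length ∧ (b = d ∨ G.Adj b d) := by
  obtain ⟨x', hxx'⟩ := hC.exists_adj hx
  obtain ⟨c, hc, -⟩ := hC.exists_isSpanningPath hmin.le hx hxx'
  have hp : IsSpanningPath p.reverse {w | w ∈ p.support} :=
    ⟨hpq.isPath.of_append_left.reverse, by simp⟩
  have hq : IsSpanningPath q {w | w ∈ q.support} := ⟨hpq.isPath.of_append_right.of_cons, rfl⟩
  have hD : {w | w ∈ p.support} ∪ {w | w ∈ q.support} = D.supp := by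
    rw [← hpq.setOf_mem_support, support_append_cons]
    exact Set.ext fun w => List.mem_append.symm
  have hdisj := disjoint_support_of_isPath_append_cons hpq.isPath
  have hCD := disjoint_supp_of_ne hDC.symm
  rw [← hD, Set.disjoint_union_right] at hCD
  have hcp := hc.append_cons hp hCD.1 hxy
  have hcpv : IsValidPath (c.append (.cons hxy p.reverse)) := by
    refine ⟨hcp.isPath, by simp, fun _ => ?_⟩
    exact hmin.not_adj_start_of_isSpanningPath hG hC hDC hpq (adjClosed_supp C hx hxx')
  have hqv := hmin.not_isValidPath_of_disjoint hC hDC hcp hq (hCD.2.union_left hdisj)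
    (by rw [Set.union_assoc, hD]) hcpv
  rcases nil_or_even_length_and_adj_of_not_isValidPath hq.isPath hqv with hnil | ⟨heven, hadj⟩
  · exact ⟨(Walk.length_eq_zero_iff.mpr hnil) ▸ Even.zero, .inl hnil.eq⟩
  · exact ⟨heven, .inr hadj⟩

lemma odd_length_right_of_append [Fintype V] (hmin : IsMinValidFactor G H) (hG : IsCubic G)
    (hC : OddCycleComp H C) (hDC : D ≠ C) {p : G.Walk a y} {q : G.Walk y d}
    (hpq : IsSpanningPath (p.append q) D.supp) (hx : x ∈ C.supp) (hxy : G.Adj x y) :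
    Odd q.length := by
  cases q with
  | nil => exact absurd hxy (hmin.not_adj_start_of_isSpanningPath hG hC hDC hpq.reverse hx)
  | cons hyb q =>
    rw [Walk.length_cons]
    exact (hmin.even_length_and_eq_or_adj_of_append_cons hG hC hDC hpq hx hxy).1.add_one

lemma odd_length_left_of_append [Fintype V] (hmin : IsMinValidFactor G H) (hG : IsCubic G)
    (hC : OddCycleComp H C) (hDC : D ≠ C) {p : G.Walk a y} {q : G.Walk y d}
    (hpq : IsSpanningPath (p.append q) D.supp) (hx : x ∈ C.supp) (hxy : G.Adj x y) :
    Odd p.length := by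
  have hrev := hpq.reverse
  rw [Walk.reverse_append] at hrev
  simpa using hmin.odd_length_right_of_append hG hC hDC hrev hx hxy

lemma not_isSpanningPath_append_append [Fintype V] (hmin : IsMinValidFactor G H)
    (hG : IsCubic G) (hC : OddCycleComp H C) (hDC : D ≠ C) (hx : x ∈ C.supp) (hxy : G.Adj x y)
    (hz : z ∈ C.supp) (hzw : G.Adj z w) (hyw : y ≠ w) (p : G.Walk a y) (q : G.Walk y w)
    (r : G.Walk w d) : ¬ IsSpanningPath (p.append (q.append r)) D.supp := by
  intro hpqr
  have hqr := hmin.odd_length_right_of_append hG hC hDC hpqr hx hxy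
  have hr := hmin.odd_length_right_of_append hG hC hDC (p.append_assoc q r ▸ hpqr) hz hzw
  obtain ⟨b, hyb, q, rfl⟩ := q.exists_eq_cons_of_ne hyw
  have hbd := (hmin.even_length_and_eq_or_adj_of_append_cons hG hC hDC hpqr hx hxy).2
  rw [Walk.length_append, Walk.length_cons] at hqr
  cases q with
  | nil => rw [Walk.length_nil] at hqr; grind
  | @cons _ c _ hbc q =>
  rw [Walk.cons_append, Walk.cons_append] at hpqr
  have hbd : G.Adj b d := by
    refine hbd.resolve_left ?_
    rintro rfl
    exact Walk.not_nil_cons (Walk.isPath_iff_nil.mp hpqr.isPath.of_append_right.of_cons)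
  -- Reversing the part after `b` makes the piece after `w` one edge shorter than the walk from `b`
  -- to `w`, which has the wrong parity.
  rw [← Walk.concat_append] at hpqr
  have hrot := hpqr.posa_rotation hbd
  rw [Walk.reverse_append, ← Walk.cons_append, Walk.append_assoc] at hrot
  have hq := hmin.odd_length_right_of_append hG hC hDC hrot hz hzw
  rw [Walk.length_reverse] at hq
  rw [Walk.length_cons] at hqr
  grind

lemma eq_of_adj_of_adj [Fintype V] (hmin : IsMinValidFactor G H) (hG : IsCubic G)
    (hC : OddCycleComp H C) (hDC : D ≠ C) (hx : x ∈ C.supp) (hxy : G.Adj x y) (hz : z ∈ C.supp)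
    (hzy : G.Adj z y) (hy : y ∈ D.supp) : x = z := by
  obtain ⟨a, d, p, hp⟩ := hmin.exists_isSpanningPath D
  have hend := hmin.not_adj_start_of_isSpanningPath hG hC hDC hp hx
  have hend' := hmin.not_adj_start_of_isSpanningPath hG hC hDC hp.reverse hx
  have hcard := ncard_neighborSet_toSubgraph_of_ne_ends hp.isPath (hp.mem_support_iff.mpr hy)
    (fun h => hend (h ▸ hxy)) (fun h => hend' (h ▸ hxy))
  have hnot {v : V} (hv : v ∈ C.supp) : v ∉ p.toSubgraph.neighborSet y :=
    fun hyv => (disjoint_supp_of_ne hDC).notMem_of_mem_left (hp.mem_support_iff.mp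
      (p.mem_support_of_adj_toSubgraph hyv.symm)) hv
  exact eq_of_adj_of_notMem (hG y) (p.toSubgraph.neighborSet_subset y) hcard hxy.symm (hnot hx)
    hzy.symm (hnot hz)

lemma eq_of_adj_of_adj_of_mem_supp [Fintype V] (hmin : IsMinValidFactor G H) (hG : IsCubic G)
    (hC : OddCycleComp H C) (hDC : D ≠ C) (hx : x ∈ C.supp) (hxy : G.Adj x y) (hz : z ∈ C.supp)
    (hzw : G.Adj z w) (hy : y ∈ D.supp) (hw : w ∈ D.supp) : x = z := by
  by_cases hyw : y = w
  · subst hyw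
    exact hmin.eq_of_adj_of_adj hG hC hDC hx hxy hz hzw hy
  exfalso
  obtain ⟨a, d, p, hp⟩ := hmin.exists_isSpanningPath D
  obtain ⟨p₁, p₂, hp₁₂⟩ := Walk.mem_support_iff_exists_append.mp (hp.mem_support_iff.mpr hy)
  have hw' := hp.mem_support_iff.mpr hw
  rw [hp₁₂] at hp hw'
  rcases Walk.mem_support_append_iff _ _ |>.mp hw' with hw₁ | hw₂
  · obtain ⟨q, r, rfl⟩ := Walk.mem_support_iff_exists_append.mp hw₁
    rw [← Walk.append_assoc] at hp
    exact hmin.not_isSpanningPath_append_append hG hC hDC hz hzw hx hxy (Ne.symm hyw) q r p₂ hp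
  · obtain ⟨q, r, rfl⟩ := Walk.mem_support_iff_exists_append.mp hw₂
    exact hmin.not_isSpanningPath_append_append hG hC hDC hx hxy hz hzw hyw p₁ q r hp

lemma oddPathComp_of_adj [Fintype V] (hmin : IsMinValidFactor G H) (hG : IsCubic G)
    (hC : OddCycleComp H C) (hx : x ∈ C.supp) (hy : y ∉ C.supp) (hxy : G.Adj x y) :
    OddPathComp H (H.connectedComponentMk y) := by
  constructor
  · obtain ⟨a, d, p, hp⟩ := hmin.exists_isSpanningPath (H.connectedComponentMk y)
    obtain ⟨p₁, p₂, hp₁₂⟩ := Walk.mem_support_iff_exists_append.mp (hp.mem_support_iff.mpr rfl)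
    rw [hp₁₂] at hp
    rw [hp.card_eq, Walk.length_append]
    exact ((hmin.odd_length_left_of_append hG hC hy hp hx hxy).add_odd
      (hmin.odd_length_right_of_append hG hC hy hp hx hxy)).add_one
  · by_contra! hne
    have hcycle : IsCycleComp H (H.connectedComponentMk y) := fun v hv => by
      have := hmin.1.1.2.1 v
      have := hne v hv
      omega
    obtain ⟨y', hyy'⟩ := Set.nonempty_of_ncard_ne_zero (s := H.neighborSet y)
      ((hcycle y rfl).trans_ne two_ne_zero)
    obtain ⟨p, hp⟩ := hcycle.exists_isSpanningPath_of_adj rfl hyy'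
    exact hmin.not_adj_start_of_isSpanningPath hG hC hy (hp.mapLe hmin.le).reverse hx hxy

lemma exists_chord_of_adj [Finite V] (hmin : IsMinValidFactor G H) (hC : OddCycleComp H C)
    (hx : x ∈ C.supp) (hxx' : H.Adj x x') (hy : y ∈ C.supp) (hxy : G.Adj x y)
    (hnxy : ¬ H.Adj x y) : ∃ a ∈ C.supp, G.Adj x' a ∧ ¬ H.Adj x' a := by
  have hx' : x' ∈ C.supp := adjClosed_supp C hx hxx'
  obtain ⟨p, hp⟩ := hC.2.exists_isSpanningPath_of_adj hx hxx'
  obtain ⟨s, t, rfl⟩ := Walk.mem_support_iff_exists_append.mp (hp.mem_support_iff.mpr hy)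
  obtain ⟨a, hya, t, rfl⟩ := t.exists_eq_cons_of_ne hxy.ne'
  obtain ⟨m, hx'm, s, rfl⟩ := s.exists_eq_cons_of_ne (by rintro rfl; exact hnxy hxx')
  refine ⟨a, adjClosed_supp C hy hya, ?_, fun hx'a => ?_⟩
  · have hpG : IsSpanningPath ((Walk.cons (hmin.le hx'm) (s.mapLe hmin.le)).append
        (.cons (hmin.le hya) (t.mapLe hmin.le))) (C.supp ∪ C.supp) := by
      simpa using hp.mapLe hmin.le
    exact (hmin.even_length_and_adj hC (hpG.posa_rotation hxy.symm)).2
  · have hdisj := disjoint_support_of_isPath_append_cons hp.isPath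
    have hm : m ∈ (Walk.cons hx'm s).support := by simp
    have hmx : m ≠ x := hdisj.ne_of_mem hm t.end_mem_support
    have ham : a ≠ m := (hdisj.ne_of_mem hm t.start_mem_support).symm
    have hax : a ≠ x := by rintro rfl; exact hnxy hya.symm
    have hmx_eq : {m, x} = H.neighborSet x' := by
      refine Set.eq_of_subset_of_ncard_le (Set.pair_subset hx'm hxx'.symm) ?_
      rw [Set.ncard_pair hmx, ← Nat.card_coe_set_eq, hC.2 x' hx']
    have ha : a ∈ ({m, x} : Set V) := hmx_eq.superset hx'a
    exact ha.elim ham hax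

lemma adj_of_adj_of_mem_supp [Fintype V] (hmin : IsMinValidFactor G H) (hG : IsCubic G)
    (hC : OddCycleComp H C) (hx : x ∈ C.supp) (hy : y ∈ C.supp) (hxy : G.Adj x y) :
    H.Adj x y := by
  classical
  by_contra hnxy
  have hclosed : AdjClosed H {v | v ∈ C.supp ∧ ∃ a ∈ C.supp, G.Adj v a ∧ ¬ H.Adj v a} := by
    rintro v ⟨hv, a, ha, hva, hnva⟩ v' hvv'
    exact ⟨adjClosed_supp C hv hvv', hmin.exists_chord_of_adj hC hv hvv' ha hva hnva⟩
  let M : G.Subgraph :=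
    { verts := C.supp
      Adj u v := (u ∈ C.supp ∧ v ∈ C.supp) ∧ G.Adj u v ∧ ¬ H.Adj u v
      adj_sub h := h.2.1
      edge_vert h := h.1.1
      symm := ⟨fun u v h => ⟨h.1.symm, h.2.1.symm, fun huv => h.2.2 huv.symm⟩⟩ }
  have hM : M.IsMatching := fun v hv => by
    obtain ⟨-, a, ha, hva, hnva⟩ := hclosed.mem_of_reachable ⟨hx, y, hy, hxy, hnxy⟩
      (C.reachable_of_mem_supp hx hv)
    refine ⟨a, ⟨⟨hv, ha⟩, hva, hnva⟩, fun b hb => ?_⟩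
    exact eq_of_adj_of_notMem (hG v) (fun _ h => hmin.le h) (hC.2 v hv) hb.2.1 hb.2.2 hva hnva
  have heven := hM.even_card
  rw [Set.toFinset_card, ← Nat.card_eq_fintype_card] at heven
  exact Nat.not_even_iff_odd.mpr hC.1 heven

end IsMinValidFactor

end Surgery

/-- Every vertex of an odd cycle of a minimal valid factor is adjacent in G to a
vertex of an odd path component, and two distinct vertices of the cycle are
joined to two distinct odd path components. -/
theorem stmt12 {V : Type*} [Fintype V] (G H : SimpleGraph V) (hG : IsCubic G)
    (hmin : IsMinValidFactor G H)
    (C : H.ConnectedComponent) (hC : OddCycleComp H C) :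
    (∀ x ∈ C.supp, ∃ y : V, G.Adj x y ∧ OddPathComp H (H.connectedComponentMk y)) ∧
    (∀ x z : V, x ∈ C.supp → z ∈ C.supp → x ≠ z →
      ∀ y w : V, G.Adj x y → G.Adj z w →
        OddPathComp H (H.connectedComponentMk y) →
        OddPathComp H (H.connectedComponentMk w) →
        H.connectedComponentMk y ≠ H.connectedComponentMk w) := by
  refine ⟨fun x hx => ?_, fun x z hx hz hxz y w hxy hzw hy _ hyw => ?_⟩
  · obtain ⟨y, hxy, hnxy⟩ : ∃ y, G.Adj x y ∧ ¬ H.Adj x y := by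
      refine Set.exists_mem_notMem_of_ncard_lt_ncard (s := H.neighborSet x)
        (t := G.neighborSet x) ?_
      rw [← Nat.card_coe_set_eq, ← Nat.card_coe_set_eq, hG x, hC.2 x hx]
      norm_num
    have hy : y ∉ C.supp := fun hy => hnxy (hmin.adj_of_adj_of_mem_supp hG hC hx hy hxy)
    exact ⟨y, hxy, hmin.oddPathComp_of_adj hG hC hx hy hxy⟩
  · have hyC : H.connectedComponentMk y ≠ C := by
      rintro rfl
      obtain ⟨v, hv, hv1⟩ := hy.2
      have := hC.2 v hv
      omega
    exact hxz (hmin.eq_of_adj_of_adj_of_mem_supp hG hC hyC hx hxy hz hzw rfl hyw.symm)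
end

section
/- Let G be a cubic graph and P* a valid factor of G minimizing the number of components and, subject to that, the number of odd cycles. Then no path component of P* is joined by edges of G to two distinct odd cycle components of P*. -/
open SimpleGraph

/-!
An odd path with adjacent ends can be closed up to a cycle without changing the components, so the
condition on odd paths does not affect the minimum number of components, and `H` is minimal among
all path-cycle factors. Opening cycles and joining path ends then shows that no edge of `G` joins a
cycle of `H` to a path end or to another cycle.

Suppose a path of `H` is joined by edges `xy` and `x'y'` to two different cycles, the one through
`x` being odd. Then `y` has two neighbours on the path, so `y ≠ y'` because `G` is cubic. Let `z`
be the neighbour of `y` on the path in the direction of `y'`, and `a` a neighbour of `x` on its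
cycle. Replacing `xa` and `yz` by `xy` preserves the number of components and loses the odd cycle.
The new factor is valid: its path through `y'` cannot have adjacent ends, as closing it up would
give a minimal path-cycle factor with two cycles joined by `x'y'`; the ends of its path
through `a` are `a` and an end of the old path, which are not adjacent in `G`.
-/

section PathCycleFactors

variable {V : Type*} {A G H K L : SimpleGraph V} {a u v w x y y' z : V}

/-- The degree of a vertex, in the `Nat.card` form used by `IsValidFactor`; unlike
`SimpleGraph.degree` it needs no finiteness instance. -/
noncomputable abbrev deg (K : SimpleGraph V) (v : V) : ℕ := Nat.card (K.neighborSet v)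

section Degree

lemma eq_of_deg_eq_one (hu : deg K u = 1) (hv : K.Adj u v) (hw : K.Adj u w) : v = w := by
  have := (Nat.card_eq_one_iff_unique.1 hu).1
  exact congrArg Subtype.val (Subsingleton.elim (⟨v, hv⟩ : K.neighborSet u) ⟨w, hw⟩)

lemma deleteEdges_sup_edge (h : K.Adj x y) : K.deleteEdges {s(x, y)} ⊔ edge x y = K :=
  sdiff_sup_cancel ((edge_le_iff _).2 (.inr h))

lemma sup_edge_adj_iff (hne : x ≠ y) :
    (K ⊔ edge x y).Adj u v ↔ K.Adj u v ∨ u = x ∧ v = y ∨ u = y ∧ v = x := by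
  rw [sup_adj, edge_adj]
  grind

variable [Finite V]

lemma deg_pos_iff : 0 < deg K v ↔ ∃ w, K.Adj v w :=
  (Set.ncard_pos (Set.toFinite _)).trans Iff.rfl

open Classical in
lemma deg_sup_edge (hne : x ≠ y) (h : ¬ K.Adj x y) (v : V) :
    deg (K ⊔ edge x y) v = deg K v + if v = x ∨ v = y then 1 else 0 := by
  by_cases hv : v = x ∨ v = y
  · obtain ⟨w, hw, hins⟩ : ∃ w, ¬ K.Adj v w ∧
        (K ⊔ edge x y).neighborSet v = insert w (K.neighborSet v) := by
      rcases hv with rfl | rfl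
      · refine ⟨y, h, ?_⟩
        ext
        simp only [mem_neighborSet, Set.mem_insert_iff, sup_edge_adj_iff hne]
        grind
      · refine ⟨x, fun h' ↦ h h'.symm, ?_⟩
        ext
        simp only [mem_neighborSet, Set.mem_insert_iff, sup_edge_adj_iff hne]
        grind
    rw [if_pos hv, deg, hins]
    exact Set.ncard_insert_of_notMem hw (Set.toFinite _)
  · have : (K ⊔ edge x y).neighborSet v = K.neighborSet v := by
      ext
      simp only [mem_neighborSet, sup_edge_adj_iff hne]
      grind
    rw [if_neg hv, deg, this, add_zero]

open Classical in
lemma deg_deleteEdges_add (h : K.Adj x y) (v : V) :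
    deg (K.deleteEdges {s(x, y)}) v + (if v = x ∨ v = y then 1 else 0) = deg K v := by
  rw [← deg_sup_edge h.ne (by simp), deleteEdges_sup_edge h]

lemma deg_deleteEdges_left (h : K.Adj x y) : deg (K.deleteEdges {s(x, y)}) x + 1 = deg K x := by
  rw [← deg_deleteEdges_add h, if_pos (.inl rfl)]

lemma deg_deleteEdges_right (h : K.Adj x y) : deg (K.deleteEdges {s(x, y)}) y + 1 = deg K y := by
  rw [← deg_deleteEdges_add h, if_pos (.inr rfl)]

end Degree

section Reachability

lemma reachable_sup_edge_iff : (K ⊔ edge x y).Reachable u v ↔ K.Reachable u v ∨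
    K.Reachable u x ∧ K.Reachable y v ∨ K.Reachable u y ∧ K.Reachable x v := by
  have hK : K ≤ K ⊔ edge x y := le_sup_left
  have hxy : (K ⊔ edge x y).Reachable x y := by
    by_cases hne : x = y
    · rw [hne]
    · exact Adj.reachable ((sup_edge_adj_iff hne).2 (.inr (.inl ⟨rfl, rfl⟩)))
  constructor
  · rintro ⟨p⟩
    induction p with
    | nil => exact .inl .rfl
    | @cons u w v h p ih =>
      rw [sup_adj, edge_adj] at h
      rcases h with h | ⟨⟨rfl, rfl⟩ | ⟨rfl, rfl⟩, -⟩
      · exact ih.imp h.reachable.trans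
          (Or.imp (And.imp_left h.reachable.trans) (And.imp_left h.reachable.trans))
      · rcases ih with ih | ⟨-, ih⟩ | ⟨-, ih⟩
        exacts [.inr (.inl ⟨.rfl, ih⟩), .inr (.inl ⟨.rfl, ih⟩), .inl ih]
      · rcases ih with ih | ⟨-, ih⟩ | ⟨-, ih⟩
        exacts [.inr (.inr ⟨.rfl, ih⟩), .inl ih, .inr (.inr ⟨.rfl, ih⟩)]
  · rintro (h | ⟨h₁, h₂⟩ | ⟨h₁, h₂⟩)
    exacts [h.mono hK, ((h₁.mono hK).trans hxy).trans (h₂.mono hK),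
      ((h₁.mono hK).trans hxy.symm).trans (h₂.mono hK)]

lemma reachable_sup_edge_of_not_reachable (hx : ¬ K.Reachable u x) (hy : ¬ K.Reachable u y) :
    (K ⊔ edge x y).Reachable u v ↔ K.Reachable u v := by
  simp only [reachable_sup_edge_iff, hx, hy, false_and, or_false]

lemma reachable_sup_edge_of_reachable (h : K.Reachable x y) :
    (K ⊔ edge x y).Reachable = K.Reachable := by
  ext u v
  rw [reachable_sup_edge_iff]
  refine ⟨?_, .inl⟩
  rintro (h' | ⟨h₁, h₂⟩ | ⟨h₁, h₂⟩)
  exacts [h', (h₁.trans h).trans h₂, (h₁.trans h.symm).trans h₂]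

lemma reachable_deleteEdges_of_not_isBridge (hadj : K.Adj x y) (h : ¬ K.IsBridge s(x, y)) :
    (K.deleteEdges {s(x, y)}).Reachable = K.Reachable := by
  rw [isBridge_iff, not_not] at h
  rw [← reachable_sup_edge_of_reachable h, deleteEdges_sup_edge hadj]

lemma exists_adj_reachable_deleteEdges (h : K.Reachable u v) (hne : u ≠ v) :
    ∃ w, K.Adj u w ∧ (K.deleteEdges {s(u, w)}).Reachable w v := by
  obtain ⟨p, hp⟩ := h.exists_isPath
  cases p with
  | nil => exact absurd rfl hne
  | @cons _ w _ hadj q =>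
    rw [Walk.cons_isPath_iff] at hp
    exact ⟨w, hadj, reachable_deleteEdges_iff_exists_walk.2
      ⟨q, fun he ↦ hp.2 (q.fst_mem_support_of_mem_edges he)⟩⟩

end Reachability

section Components

lemma supp_connectedComponentMk (K : SimpleGraph V) (u : V) :
    (K.connectedComponentMk u).supp = {v | K.Reachable u v} := by
  ext v
  rw [ConnectedComponent.mem_supp_iff, ConnectedComponent.eq, reachable_comm]
  rfl

lemma isCycleComp_mk_iff :
    IsCycleComp K (K.connectedComponentMk u) ↔ ∀ v, K.Reachable u v → deg K v = 2 := by
  rw [IsCycleComp, supp_connectedComponentMk]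
  rfl

lemma isCycleComp_sup_edge_iff [Finite V] (huv : u ≠ v) (hadj : ¬ K.Adj u v)
    (hxu : ¬ K.Reachable x u) (hxv : ¬ K.Reachable x v) :
    IsCycleComp (K ⊔ edge u v) ((K ⊔ edge u v).connectedComponentMk x) ↔
      IsCycleComp K (K.connectedComponentMk x) := by
  simp only [isCycleComp_mk_iff, reachable_sup_edge_of_not_reachable hxu hxv]
  refine forall₂_congr fun w hw ↦ ?_
  have hwu : w ≠ u := fun h ↦ hxu (h ▸ hw)
  have hwv : w ≠ v := fun h ↦ hxv (h ▸ hw)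
  rw [deg_sup_edge huv hadj, if_neg (by simp [hwu, hwv]), add_zero]

lemma numComponents_congr (h : K.Reachable = L.Reachable) :
    numComponents K = numComponents L :=
  Nat.card_congr (Quot.congrRight fun u v ↦ by rw [h])

lemma numComponents_sup_edge_add_one [Finite V] (h : ¬ K.Reachable x y) :
    numComponents (K ⊔ edge x y) + 1 = numComponents K := by
  classical
  let f (c : {c // c ≠ K.connectedComponentMk x}) : (K ⊔ edge x y).ConnectedComponent :=
    c.1.map (Hom.ofLE le_sup_left)
  have hf : Function.Bijective f := by
    constructor
    · rintro ⟨⟨u⟩, hu⟩ ⟨⟨v⟩, hv⟩ huv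
      have hu : ¬ K.Reachable u x := fun h ↦ hu (ConnectedComponent.sound h)
      have hv : ¬ K.Reachable v x := fun h ↦ hv (ConnectedComponent.sound h)
      refine Subtype.ext (ConnectedComponent.sound ?_)
      rcases reachable_sup_edge_iff.1 (ConnectedComponent.exact huv) with h' | ⟨h', -⟩ | ⟨-, h'⟩
      exacts [h', absurd h' hu, absurd h'.symm hv]
    · rintro ⟨v⟩
      by_cases hv : K.Reachable v x
      · refine ⟨⟨K.connectedComponentMk y, fun h' ↦ h (ConnectedComponent.exact h').symm⟩, ?_⟩
        exact ConnectedComponent.sound (reachable_sup_edge_iff.2 (.inr (.inr ⟨.rfl, hv.symm⟩)))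
      · exact ⟨⟨K.connectedComponentMk v, fun h' ↦ hv (ConnectedComponent.exact h')⟩, rfl⟩
  rw [numComponents, ← Nat.card_congr (Equiv.ofBijective f hf), ← Finite.card_option,
    numComponents, Nat.card_congr (Equiv.optionSubtypeNe _)]

lemma supp_connectedComponentMk_of_adj (hu : deg K u = 1) (hv : deg K v = 1) (h : K.Adj u v) :
    (K.connectedComponentMk u).supp = {u, v} := by
  rw [supp_connectedComponentMk]
  refine Set.Subset.antisymm ?_ (Set.pair_subset .rfl h.reachable)
  rintro w ⟨p⟩
  by_contra hw
  obtain ⟨d, -, hd, hd'⟩ := p.exists_boundary_dart {u, v} (.inl rfl) hw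
  rcases hd with hd | hd
  · exact hd' (.inr (eq_of_deg_eq_one hu (hd ▸ d.adj) h))
  · exact hd' (.inl (eq_of_deg_eq_one hv (hd ▸ d.adj) h.symm))

lemma not_adj_of_odd_card_supp {c : K.ConnectedComponent} (hc : Odd (Nat.card c.supp))
    (huc : u ∈ c.supp) (hu : deg K u = 1) (hv : deg K v = 1) : ¬ K.Adj u v := by
  intro h
  rw [← (c.mem_supp_iff u).1 huc, supp_connectedComponentMk_of_adj hu hv h,
    Nat.card_coe_set_eq, Set.ncard_pair h.ne] at hc
  exact absurd hc (by decide)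

end Components

section Counting

lemma deg_toSimpleGraph (c : K.ConnectedComponent) (v : c.supp) :
    deg c.toSimpleGraph v = deg K v := by
  have : K.neighborSet v = (↑) '' c.toSimpleGraph.neighborSet v :=
    Set.ext fun w ↦ ⟨fun h ↦ ⟨⟨w, c.mem_supp_of_adj_mem_supp v.2 h⟩, h, rfl⟩,
      fun ⟨_, h, hw⟩ ↦ hw ▸ h⟩
  rw [deg, deg, this, Nat.card_image_of_injective Subtype.val_injective]

lemma deg_eq_degree (v : V) [Fintype (K.neighborSet v)] : deg K v = K.degree v :=
  Nat.card_eq_fintype_card.trans (K.card_neighborSet_eq_degree v)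

lemma two_mul_card_le_sum_deg_add_two [Fintype V] (h : K.Connected) :
    2 * Fintype.card V ≤ ∑ v, deg K v + 2 := by
  classical
  have hedges := h.card_vert_le_card_edgeSet_add_one
  rw [Nat.card_eq_fintype_card, Nat.card_eq_fintype_card, ← edgeFinset_card] at hedges
  have hsum := K.sum_degrees_eq_twice_card_edges
  simp only [← deg_eq_degree] at hsum
  lia

variable [Finite V]

lemma exists_ne_odd_deg_reachable (h : Odd (deg K u)) :
    ∃ v, v ≠ u ∧ K.Reachable u v ∧ Odd (deg K v) := by
  classical
  have := Fintype.ofFinite V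
  let c := K.connectedComponentMk u
  have hu : Odd (c.toSimpleGraph.degree ⟨u, rfl⟩) := by
    rwa [← deg_eq_degree, deg_toSimpleGraph]
  obtain ⟨v, hne, hv⟩ := c.toSimpleGraph.exists_ne_odd_degree_of_exists_odd_degree _ hu
  rw [← deg_eq_degree, deg_toSimpleGraph] at hv
  exact ⟨v, fun h ↦ hne (Subtype.ext h), (ConnectedComponent.exact v.2).symm, hv⟩

lemma card_le_two_of_connected (h : K.Connected) (hK : ∀ v, deg K v ≤ 2) {S : Finset V}
    (hS : ∀ v ∈ S, deg K v ≤ 1) : S.card ≤ 2 := by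
  classical
  have := Fintype.ofFinite V
  have hdeg (v : V) : deg K v + (if v ∈ S then 1 else 0) ≤ 2 := by
    split_ifs with hv
    · exact Nat.add_le_add_right (hS v hv) 1
    · exact hK v
  have hsum := Finset.sum_le_sum fun v (_ : v ∈ Finset.univ) ↦ hdeg v
  simp only [Finset.sum_add_distrib, Finset.sum_ite_mem, Finset.univ_inter, Finset.sum_const,
    Finset.card_univ, smul_eq_mul] at hsum
  have := two_mul_card_le_sum_deg_add_two h
  lia

lemma eq_or_eq_or_eq_of_deg_le_one (hK : ∀ v, deg K v ≤ 2) (huv : K.Reachable u v)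
    (huw : K.Reachable u w) (hu : deg K u ≤ 1) (hv : deg K v ≤ 1) (hw : deg K w ≤ 1) :
    u = v ∨ u = w ∨ v = w := by
  classical
  by_contra! hne
  let c := K.connectedComponentMk u
  let u' : c.supp := ⟨u, rfl⟩
  let v' : c.supp := ⟨v, ConnectedComponent.sound huv.symm⟩
  let w' : c.supp := ⟨w, ConnectedComponent.sound huw.symm⟩
  have hcard : ({u', v', w'} : Finset c.supp).card = 3 :=
    Finset.card_eq_three.2 ⟨u', v', w', fun h ↦ hne.1 (congrArg Subtype.val h),
      fun h ↦ hne.2.1 (congrArg Subtype.val h), fun h ↦ hne.2.2 (congrArg Subtype.val h), rfl⟩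
  have hle : ({u', v', w'} : Finset c.supp).card ≤ 2 := by
    refine card_le_two_of_connected c.connected_toSimpleGraph (fun i ↦ ?_) fun i hi ↦ ?_
    · exact deg_toSimpleGraph c i ▸ hK i
    · rw [deg_toSimpleGraph]
      simp only [Finset.mem_insert, Finset.mem_singleton] at hi
      rcases hi with rfl | rfl | rfl <;> assumption
  lia

lemma not_isBridge_of_even_deg (hadj : K.Adj x y)
    (heven : ∀ v, K.Reachable x v → Even (deg K v)) : ¬ K.IsBridge s(x, y) := by
  rw [isBridge_iff, not_not]
  have hx : Odd (deg (K.deleteEdges {s(x, y)}) x) := by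
    have h := heven x .rfl
    rwa [← deg_deleteEdges_add hadj, if_pos (.inl rfl), Nat.even_add_one, Nat.not_even_iff_odd] at h
  obtain ⟨v, hvx, hxv, hv⟩ := exists_ne_odd_deg_reachable hx
  have h := heven v (hxv.mono (deleteEdges_le _))
  suffices v = y from this ▸ hxv
  by_contra hvy
  rw [← deg_deleteEdges_add hadj, if_neg (by tauto), add_zero] at h
  exact Nat.not_even_iff_odd.2 hv h

lemma isBridge_of_deg_eq_one (hK : ∀ v, deg K v ≤ 2) (hadj : K.Adj y z) (hyw : K.Reachable y w)
    (hw : deg K w = 1) (hwy : w ≠ y) (hwz : w ≠ z) : K.IsBridge s(y, z) := by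
  by_contra hbridge
  have hreach := reachable_deleteEdges_of_not_isBridge hadj hbridge
  have hdeg := deg_deleteEdges_add hadj
  rcases eq_or_eq_or_eq_of_deg_le_one (K := K.deleteEdges {s(y, z)}) (u := y) (v := z) (w := w)
    (fun v ↦ by grind) (hreach ▸ hadj.reachable) (hreach ▸ hyw) (by grind) (by grind) (by grind)
    with h | h | h
  exacts [hadj.ne h, hwy h.symm, hwz h.symm]

end Counting

/-- A path-cycle factor of `G`: a spanning subgraph each of whose components is a path on at least
two vertices or a cycle. It is a valid factor without the condition on odd paths. -/
structure IsPathCycleFactor (G K : SimpleGraph V) : Prop where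
  le : K ≤ G
  deg_pos (v : V) : 1 ≤ deg K v
  deg_le (v : V) : deg K v ≤ 2

namespace IsPathCycleFactor

lemma deg_eq_two (hK : IsPathCycleFactor G K) (h : deg K v ≠ 1) : deg K v = 2 := by
  have := hK.deg_pos v
  have := hK.deg_le v
  lia

variable [Finite V]

lemma sup_edge (hK : IsPathCycleFactor G K) (hG : G.Adj u v) (hK' : ¬ K.Adj u v)
    (hu : deg K u = 1) (hv : deg K v = 1) : IsPathCycleFactor G (K ⊔ edge u v) := by
  have hdeg := deg_sup_edge hG.ne hK'
  refine ⟨sup_le hK.le ((edge_le_iff _).2 (.inr hG)), fun w ↦ ?_, fun w ↦ ?_⟩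
  · exact hdeg w ▸ (hK.deg_pos w).trans (Nat.le_add_right _ _)
  · rw [hdeg]
    split_ifs with hw
    · rcases hw with rfl | rfl <;> lia
    · exact hK.deg_le w

lemma deleteEdges (hK : IsPathCycleFactor G K) (h : K.Adj x y) (hx : deg K x = 2)
    (hy : deg K y = 2) : IsPathCycleFactor G (K.deleteEdges {s(x, y)}) := by
  have hdeg := deg_deleteEdges_add h
  refine ⟨(deleteEdges_le _).trans hK.le, fun w ↦ ?_, fun w ↦ ?_⟩
  · have := hdeg w
    have := hK.deg_pos w
    split_ifs at * with hw
    · rcases hw with rfl | rfl <;> lia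
    · lia
  · exact (hdeg w ▸ Nat.le_add_right _ _).trans (hK.deg_le w)

-- Closing up a violating odd path preserves the components and adds an edge, so a maximal
-- path-cycle factor with the components of `K` is valid.
lemma exists_isValidFactor (hK : IsPathCycleFactor G K) :
    ∃ L, IsValidFactor G L ∧ numComponents L = numComponents K := by
  obtain ⟨L, -, ⟨hL, hreach⟩, hmax⟩ := Finite.exists_le_maximal
    (p := fun L ↦ IsPathCycleFactor G L ∧ L.Reachable = K.Reachable) ⟨hK, rfl⟩
  refine ⟨L, ⟨hL.le, fun v ↦ ⟨hL.deg_pos v, hL.deg_le v⟩, ?_⟩, numComponents_congr hreach⟩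
  intro c hc u v huc hvc hne hu hv hG
  have hnadj := not_adj_of_odd_card_supp hc huc hu hv
  have huv : L.Reachable u v := ConnectedComponent.exact (huc.trans hvc.symm)
  have hle := hmax ⟨hL.sup_edge hG hnadj hu hv,
    (reachable_sup_edge_of_reachable huv).trans hreach⟩ le_sup_left
  exact hnadj (hle ((sup_edge_adj_iff hne).2 (.inr (.inl ⟨rfl, rfl⟩))))

lemma exists_eq_sup_edge_of_isCycleComp (hK : IsPathCycleFactor G K)
    (hx : IsCycleComp K (K.connectedComponentMk x)) :
    ∃ L a, K = L ⊔ edge x a ∧ IsPathCycleFactor G L ∧ L.Reachable x a ∧ x ≠ a ∧ ¬ L.Adj x a ∧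
      deg L x = 1 ∧ deg L a = 1 := by
  rw [isCycleComp_mk_iff] at hx
  obtain ⟨a, ha⟩ := deg_pos_iff.1 (hK.deg_pos x)
  have hdeg_x := hx x .rfl
  have hdeg_a := hx a ha.reachable
  have hbridge := not_isBridge_of_even_deg ha fun v hv ↦ hx v hv ▸ even_two
  rw [isBridge_iff, not_not] at hbridge
  refine ⟨K.deleteEdges {s(x, a)}, a, (deleteEdges_sup_edge ha).symm,
    hK.deleteEdges ha hdeg_x hdeg_a, hbridge, ha.ne, by simp, ?_, ?_⟩
  · have := deg_deleteEdges_left ha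
    lia
  · have := deg_deleteEdges_right ha
    lia

end IsPathCycleFactor

/-- A path-cycle factor of `G` with the minimum number of components. -/
structure IsMinPathCycleFactor (G K : SimpleGraph V) : Prop extends IsPathCycleFactor G K where
  numComponents_le (L : SimpleGraph V) (hL : IsPathCycleFactor G L) :
    numComponents K ≤ numComponents L

lemma MinimizesComponents.isMinPathCycleFactor [Finite V] (hH : MinimizesComponents G H) :
    IsMinPathCycleFactor G H where
  le := hH.1.1
  deg_pos v := (hH.1.2.1 v).1
  deg_le v := (hH.1.2.1 v).2
  numComponents_le L hL := by
    obtain ⟨L', hL', hnum⟩ := hL.exists_isValidFactor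
    exact hnum ▸ hH.2 L' hL'

namespace IsMinPathCycleFactor

lemma of_numComponents_eq (hK : IsMinPathCycleFactor G K) (hL : IsPathCycleFactor G L)
    (h : numComponents L = numComponents K) : IsMinPathCycleFactor G L :=
  ⟨hL, h ▸ hK.numComponents_le⟩

variable [Finite V]

lemma reachable_of_adj (hK : IsMinPathCycleFactor G K) (hx : deg K x = 1) (hy : deg K y = 1)
    (h : G.Adj x y) : K.Reachable x y := by
  by_contra hxy
  have hle := hK.numComponents_le _ (hK.sup_edge h (fun h ↦ hxy h.reachable) hx hy)
  have := numComponents_sup_edge_add_one hxy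
  lia

lemma not_adj_of_deg_eq_one (hK : IsMinPathCycleFactor G K)
    (hx : IsCycleComp K (K.connectedComponentMk x)) (hy : deg K y = 1) : ¬ G.Adj x y := by
  intro hG
  have hxy : ¬ K.Reachable x y := fun h ↦ by have := isCycleComp_mk_iff.1 hx y h; lia
  obtain ⟨L, a, rfl, hL, hxa, hne, hadj, hx, -⟩ := hK.exists_eq_sup_edge_of_isCycleComp hx
  have hreach := reachable_sup_edge_of_reachable hxa
  rw [hreach] at hxy
  have hyx : y ≠ x := hG.ne'
  have hya : y ≠ a := fun h ↦ hxy (h ▸ hxa)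
  rw [deg_sup_edge hne hadj, if_neg (by simp [hyx, hya]), add_zero] at hy
  have hL' := hK.of_numComponents_eq hL (numComponents_congr hreach.symm)
  exact hxy (hL'.reachable_of_adj hx hy hG)

lemma not_adj_of_isCycleComp (hK : IsMinPathCycleFactor G K)
    (hx : IsCycleComp K (K.connectedComponentMk x)) (hy : IsCycleComp K (K.connectedComponentMk y))
    (hxy : ¬ K.Reachable x y) : ¬ G.Adj x y := by
  obtain ⟨L, b, rfl, hL, hyb, hne, hadj, hy, -⟩ := hK.exists_eq_sup_edge_of_isCycleComp hy
  have hreach := reachable_sup_edge_of_reachable hyb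
  rw [hreach] at hxy
  refine (hK.of_numComponents_eq hL (numComponents_congr hreach.symm)).not_adj_of_deg_eq_one ?_ hy
  exact (isCycleComp_sup_edge_iff hne hadj hxy fun h ↦ hxy (h.trans hyb.symm)).1 hx

lemma not_adj_of_adj_ends (hK : IsMinPathCycleFactor G K) (hu : deg K u = 1) (hv : deg K v = 1)
    (huv : G.Adj u v) (hnadj : ¬ K.Adj u v) (hx : IsCycleComp K (K.connectedComponentMk x))
    (hxu : ¬ K.Reachable x u) (huy : K.Reachable u y) : ¬ G.Adj x y := by
  have hruv := hK.reachable_of_adj hu hv huv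
  have hreach := reachable_sup_edge_of_reachable hruv
  have hxv : ¬ K.Reachable x v := fun h ↦ hxu (h.trans hruv.symm)
  refine (hK.of_numComponents_eq (hK.sup_edge huv hnadj hu hv)
    (numComponents_congr hreach)).not_adj_of_isCycleComp
    ((isCycleComp_sup_edge_iff huv.ne hnadj hxu hxv).2 hx) ?_ ?_
  · rw [isCycleComp_mk_iff, hreach]
    intro w hw
    rw [deg_sup_edge huv.ne hnadj]
    by_cases hends : w = u ∨ w = v
    · rcases hends with rfl | rfl <;> simp [hu, hv]
    · rw [if_neg hends, add_zero]
      refine hK.deg_eq_two fun hw' ↦ ?_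
      rcases eq_or_eq_or_eq_of_deg_le_one hK.deg_le hruv (huy.trans hw) hu.le hv.le hw'.le
        with h | h | h
      exacts [huv.ne h, hends (.inl h.symm), hends (.inr h.symm)]
  · rw [hreach]
    exact fun h ↦ hxu (h.trans huy.symm)

end IsMinPathCycleFactor

lemma reachable_sup_edge_iff_of_reroute (hxa : L.Reachable x a)
    (hu : (¬ (L ⊔ edge y x).Reachable u a ∧ ¬ (L ⊔ edge y x).Reachable u z) ∨
      (¬ (L ⊔ edge x a ⊔ edge y z).Reachable u a ∧ ¬ (L ⊔ edge x a ⊔ edge y z).Reachable u z)) :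
    (L ⊔ edge y x).Reachable u v ↔ (L ⊔ edge x a ⊔ edge y z).Reachable u v := by
  have hreach : (L ⊔ edge x a).Reachable = L.Reachable := reachable_sup_edge_of_reachable hxa
  have hHyz : (L ⊔ edge x a ⊔ edge y z).Reachable y z :=
    reachable_sup_edge_iff.2 (.inr (.inl ⟨.rfl, .rfl⟩))
  have hAya : (L ⊔ edge y x).Reachable y a :=
    reachable_sup_edge_iff.2 (.inr (.inl ⟨.rfl, hxa⟩))
  have hLA : L ≤ L ⊔ edge y x := le_sup_left
  have hLH : L ≤ L ⊔ edge x a ⊔ edge y z := le_sup_left.trans le_sup_left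
  obtain ⟨hux, huy, huz⟩ : ¬ L.Reachable u x ∧ ¬ L.Reachable u y ∧ ¬ L.Reachable u z := by
    rcases hu with ⟨hua, huz⟩ | ⟨hua, huz⟩
    · exact ⟨fun h ↦ hua ((h.trans hxa).mono hLA), fun h ↦ hua ((h.mono hLA).trans hAya),
        fun h ↦ huz (h.mono hLA)⟩
    · exact ⟨fun h ↦ hua ((h.trans hxa).mono hLH), fun h ↦ huz ((h.mono hLH).trans hHyz),
        fun h ↦ huz (h.mono hLH)⟩
  rw [reachable_sup_edge_of_not_reachable huy hux,
    reachable_sup_edge_of_not_reachable (hreach ▸ huy) (hreach ▸ huz), hreach]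

/-- `A` arises from the path-cycle factor `H` by opening a cycle at an edge `xa` and rerouting a
path `… y z …` so that its part ending in `y` continues through `yx`: the vertices `a` and `z`
become ends of different components of `A`, and components containing neither are unaffected. -/
structure IsReroute (G H A : SimpleGraph V) (a z : V) : Prop extends IsPathCycleFactor G A where
  numComponents_eq : numComponents A = numComponents H
  deg_left : deg A a = 1
  deg_right : deg A z = 1
  deg_eq_of_ne (v : V) (hva : v ≠ a) (hvz : v ≠ z) : deg A v = deg H v
  not_reachable : ¬ A.Reachable a z
  reachable_iff (u v : V) (hu : (¬ A.Reachable u a ∧ ¬ A.Reachable u z) ∨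
    (¬ H.Reachable u a ∧ ¬ H.Reachable u z)) : A.Reachable u v ↔ H.Reachable u v

namespace IsPathCycleFactor

variable [Finite V]

lemma exists_eq_sup_edge_of_deg_eq_one (hH : IsPathCycleFactor G H) (hyw : H.Reachable y w)
    (hw : deg H w = 1) (hyy' : H.Reachable y y') (hne : y ≠ y') (hy : deg H y = 2)
    (hy' : deg H y' = 2) :
    ∃ K z, H = K ⊔ edge y z ∧ IsPathCycleFactor G K ∧ ¬ K.Reachable y z ∧ K.Reachable z y' ∧
      deg K y = 1 ∧ deg K z = 1 := by
  obtain ⟨z, hyz, hzy'⟩ := exists_adj_reachable_deleteEdges hyy' hne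
  have hdeg_y := deg_deleteEdges_left hyz
  have hdeg_z := deg_deleteEdges_right hyz
  have hz : deg H z = 2 := by
    rcases eq_or_ne z y' with rfl | hzy
    · exact hy'
    · obtain ⟨b, hb, -⟩ := exists_adj_reachable_deleteEdges hzy' hzy
      have := deg_pos_iff.2 ⟨b, hb⟩
      exact hH.deg_eq_two (by lia)
  have hbridge : H.IsBridge s(y, z) :=
    isBridge_of_deg_eq_one hH.deg_le hyz hyw hw (by rintro rfl; lia) (by rintro rfl; lia)
  exact ⟨_, z, (deleteEdges_sup_edge hyz).symm, hH.deleteEdges hyz hy hz, isBridge_iff.1 hbridge,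
    hzy', by lia, by lia⟩

lemma isReroute_sup_edge (hL : IsPathCycleFactor G L) (hG : G.Adj y x) (hx : deg L x = 1)
    (ha : deg L a = 1) (hy : deg L y = 1) (hz : deg L z = 1) (hxa : L.Reachable x a)
    (hne : x ≠ a) (hadj : ¬ L.Adj x a) (hyx : ¬ L.Reachable y x) (hzx : ¬ L.Reachable z x)
    (hyz : ¬ L.Reachable y z) :
    IsReroute G (L ⊔ edge x a ⊔ edge y z) (L ⊔ edge y x) a z := by
  have hreach : (L ⊔ edge x a).Reachable = L.Reachable := reachable_sup_edge_of_reachable hxa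
  have hya : ¬ L.Reachable y a := fun h ↦ hyx (h.trans hxa.symm)
  have hza : ¬ L.Reachable z a := fun h ↦ hzx (h.trans hxa.symm)
  have hyz' : ¬ (L ⊔ edge x a).Reachable y z := hreach ▸ hyz
  have ne_of {u v : V} (h : ¬ L.Reachable u v) : u ≠ v := fun huv ↦ h (huv ▸ .rfl)
  have hdegA := deg_sup_edge hG.ne fun h ↦ hyx h.reachable
  refine ⟨hL.sup_edge hG (fun h ↦ hyx h.reachable) hy hx, ?_, ?_, ?_, fun v hva hvz ↦ ?_,
    fun h ↦ ?_, fun u v hu ↦ ?_⟩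
  · have hA := numComponents_sup_edge_add_one hyx
    have hH := numComponents_sup_edge_add_one hyz'
    rw [numComponents_congr hreach] at hH
    lia
  · rw [hdegA, if_neg (by simp [(ne_of hya).symm, hne.symm]), ha]
  · rw [hdegA, if_neg (by simp [(ne_of hyz).symm, ne_of hzx]), hz]
  · rw [hdegA, deg_sup_edge (ne_of hyz) fun h ↦ hyz' h.reachable, deg_sup_edge hne hadj]
    have := ne_of hyx
    grind
  · rcases reachable_sup_edge_iff.1 h with h | ⟨h, -⟩ | ⟨-, h⟩
    exacts [hza h.symm, hya h.symm, hyz h]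
  · exact reachable_sup_edge_iff_of_reroute hxa hu

lemma exists_isReroute_sup_edge (hK : IsPathCycleFactor G K)
    (hx : IsCycleComp K (K.connectedComponentMk x)) (hG : G.Adj y x) (hyx : ¬ K.Reachable y x)
    (hzx : ¬ K.Reachable z x) (hyz : ¬ K.Reachable y z) (hy : deg K y = 1) (hz : deg K z = 1) :
    ∃ A a, IsReroute G (K ⊔ edge y z) A a z ∧ K.Reachable x a ∧
      ∀ v, K.Reachable z v → A.Reachable z v := by
  obtain ⟨L, a, rfl, hL, hxa, hne, hadj, hx, ha⟩ := hK.exists_eq_sup_edge_of_isCycleComp hx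
  have hreach := reachable_sup_edge_of_reachable hxa
  simp only [hreach] at hyx hzx hyz ⊢
  have deg_eq {v : V} (hv : ¬ L.Reachable v x) : deg (L ⊔ edge x a) v = deg L v := by
    have hvx : v ≠ x := fun h ↦ hv (h ▸ .rfl)
    have hva : v ≠ a := fun h ↦ hv (h ▸ hxa.symm)
    rw [deg_sup_edge hne hadj, if_neg (by simp [hvx, hva]), add_zero]
  exact ⟨L ⊔ edge y x, a, hL.isReroute_sup_edge hG hx ha (deg_eq hyx ▸ hy) (deg_eq hzx ▸ hz) hxa
    hne hadj hyx hzx hyz, hxa, fun v hv ↦ hv.mono le_sup_left⟩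

lemma exists_isReroute (hH : IsPathCycleFactor G H)
    (hx : IsCycleComp H (H.connectedComponentMk x)) (hG : G.Adj y x) (hyx : ¬ H.Reachable y x)
    (hyw : H.Reachable y w) (hw : deg H w = 1) (hyy' : H.Reachable y y') (hne : y ≠ y')
    (hy : deg H y = 2) (hy' : deg H y' = 2) :
    ∃ A a z, IsReroute G H A a z ∧ H.Reachable x a ∧ H.Reachable y z ∧ A.Reachable z y' := by
  obtain ⟨K, z, rfl, hK, hyz, hzy', hy, hz⟩ :=
    hH.exists_eq_sup_edge_of_deg_eq_one hyw hw hyy' hne hy hy'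
  have hKH : K ≤ K ⊔ edge y z := le_sup_left
  have hyz_H : (K ⊔ edge y z).Reachable y z := reachable_sup_edge_iff.2 (.inr (.inl ⟨.rfl, .rfl⟩))
  have hyx_K : ¬ K.Reachable y x := fun h ↦ hyx (h.mono hKH)
  have hzx_K : ¬ K.Reachable z x := fun h ↦ hyx (hyz_H.trans (h.mono hKH))
  have hne_yz : y ≠ z := fun h ↦ hyz (h ▸ .rfl)
  have hx_K := (isCycleComp_sup_edge_iff hne_yz (fun h ↦ hyz h.reachable)
    (fun h ↦ hyx_K h.symm) fun h ↦ hzx_K h.symm).1 hx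
  obtain ⟨A, a, hA, hxa, hKA⟩ :=
    hK.exists_isReroute_sup_edge hx_K hG hyx_K hzx_K hyz hy hz
  exact ⟨A, a, z, hA, hxa.mono hKH, hyz_H, hKA y' hzy'⟩

end IsPathCycleFactor

namespace IsReroute

lemma supp_eq (hA : IsReroute G H A a z) (hu : (¬ A.Reachable u a ∧ ¬ A.Reachable u z) ∨
    (¬ H.Reachable u a ∧ ¬ H.Reachable u z)) :
    (A.connectedComponentMk u).supp = (H.connectedComponentMk u).supp := by
  simp only [supp_connectedComponentMk, hA.reachable_iff u _ hu]

lemma isCycleComp_iff (hA : IsReroute G H A a z) (hu : (¬ A.Reachable u a ∧ ¬ A.Reachable u z) ∨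
    (¬ H.Reachable u a ∧ ¬ H.Reachable u z)) :
    IsCycleComp A (A.connectedComponentMk u) ↔ IsCycleComp H (H.connectedComponentMk u) := by
  have hiff (v : V) := hA.reachable_iff u v hu
  simp only [isCycleComp_mk_iff, hiff] at hu ⊢
  refine forall₂_congr fun v hv ↦ ?_
  have hva : v ≠ a := by grind
  have hvz : v ≠ z := by grind
  rw [hA.deg_eq_of_ne v hva hvz]

lemma not_reachable_of_isCycleComp (hA : IsReroute G H A a z)
    (hu : IsCycleComp A (A.connectedComponentMk u)) : ¬ A.Reachable u a ∧ ¬ A.Reachable u z := by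
  rw [isCycleComp_mk_iff] at hu
  refine ⟨fun h ↦ ?_, fun h ↦ ?_⟩
  · have := hu a h
    have := hA.deg_left
    lia
  · have := hu z h
    have := hA.deg_right
    lia

lemma numOddCycles_lt [Finite V] (hA : IsReroute G H A a z)
    (ha : OddCycleComp H (H.connectedComponentMk a)) : numOddCycles A < numOddCycles H := by
  let oddCycles (K : SimpleGraph V) : Set (Set V) :=
    ConnectedComponent.supp '' {c | OddCycleComp K c}
  have hcard (K : SimpleGraph V) : numOddCycles K = (oddCycles K).ncard :=
    (Set.ncard_image_of_injective _ ConnectedComponent.supp_injective).symm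
  rw [hcard, hcard]
  refine Set.ncard_lt_ncard ⟨?_, fun hle ↦ ?_⟩ (Set.toFinite _)
  · rintro _ ⟨⟨u⟩, ⟨hodd, hcycle⟩, rfl⟩
    have hu := hA.not_reachable_of_isCycleComp hcycle
    have hsupp := hA.supp_eq (.inl hu)
    exact ⟨H.connectedComponentMk u, ⟨hsupp ▸ hodd, (hA.isCycleComp_iff (.inl hu)).1 hcycle⟩,
      hsupp.symm⟩
  · obtain ⟨c, ⟨-, hcycle⟩, hsupp⟩ := hle ⟨_, ha, rfl⟩
    have hac : a ∈ c.supp := hsupp ▸ rfl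
    have := hcycle a hac
    have := hA.deg_left
    lia

lemma isMinPathCycleFactor (hA : IsReroute G H A a z) (hH : IsMinPathCycleFactor G H) :
    IsMinPathCycleFactor G A :=
  hH.of_numComponents_eq hA.toIsPathCycleFactor hA.numComponents_eq

variable [Finite V]

lemma not_adj_of_reachable_left (hA : IsReroute G H A a z) (hH : IsMinPathCycleFactor G H)
    (ha : IsCycleComp H (H.connectedComponentMk a)) (hu : deg A u = 1) (hv : deg A v = 1)
    (hua : A.Reachable u a) : ¬ G.Adj u v := by
  have key {w : V} (hw : deg A w = 1) (hwa : w ≠ a) (hr : A.Reachable a w) : ¬ G.Adj a w := by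
    have hwz : w ≠ z := fun h ↦ hA.not_reachable (h ▸ hr)
    exact hH.not_adj_of_deg_eq_one ha (hA.deg_eq_of_ne w hwa hwz ▸ hw)
  intro hG
  have huv := (hA.isMinPathCycleFactor hH).reachable_of_adj hu hv hG
  rcases eq_or_eq_or_eq_of_deg_le_one hA.deg_le huv hua hu.le hv.le hA.deg_left.le
    with rfl | rfl | rfl
  · exact hG.ne rfl
  · exact key hv hG.ne' huv hG
  · exact key hu hG.ne huv.symm hG.symm

lemma not_adj_of_reachable_right (hA : IsReroute G H A a z) (hH : IsMinPathCycleFactor G H)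
    (hx : IsCycleComp H (H.connectedComponentMk x)) (hxa : ¬ H.Reachable x a)
    (hxz : ¬ H.Reachable x z) (hG : G.Adj x y) (hzy : A.Reachable z y) (hu : deg A u = 1)
    (hv : deg A v = 1) (hadj : ¬ A.Adj u v) (huz : A.Reachable u z) : ¬ G.Adj u v := by
  intro huv
  have hxz_A : ¬ A.Reachable x z := (hA.reachable_iff x z (.inr ⟨hxa, hxz⟩)).not.2 hxz
  exact (hA.isMinPathCycleFactor hH).not_adj_of_adj_ends hu hv huv hadj
    ((hA.isCycleComp_iff (.inr ⟨hxa, hxz⟩)).2 hx) (fun h ↦ hxz_A (h.trans huz))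
    (huz.trans hzy) hG

lemma isValidFactor (hA : IsReroute G H A a z) (hH : MinimizesComponents G H)
    (ha : IsCycleComp H (H.connectedComponentMk a))
    (hx : IsCycleComp H (H.connectedComponentMk x)) (hxa : ¬ H.Reachable x a)
    (hxz : ¬ H.Reachable x z) (hG : G.Adj x y) (hzy : A.Reachable z y) : IsValidFactor G A := by
  have hmin := hH.isMinPathCycleFactor
  refine ⟨hA.le, fun v ↦ ⟨hA.deg_pos v, hA.deg_le v⟩, ?_⟩
  rintro ⟨w⟩ hodd u v huc hvc hne hu hv
  have hu_mk := (ConnectedComponent.mem_supp_iff _ _).1 huc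
  by_cases hua : A.Reachable u a
  · exact hA.not_adj_of_reachable_left hmin ha hu hv hua
  by_cases huz : A.Reachable u z
  · exact hA.not_adj_of_reachable_right hmin hx hxa hxz hG hzy hu hv
      (not_adj_of_odd_card_supp hodd huc hu hv) huz
  rw [← hu_mk, hA.supp_eq (.inl ⟨hua, huz⟩)] at hodd hvc
  have huv : A.Reachable u v :=
    (hA.reachable_iff u v (.inl ⟨hua, huz⟩)).2 (ConnectedComponent.exact hvc).symm
  have hdeg {i : V} (hi : A.Reachable u i) : deg A i = deg H i :=
    hA.deg_eq_of_ne i (fun h ↦ hua (h ▸ hi)) fun h ↦ huz (h ▸ hi)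
  exact hH.1.2.2 _ hodd u v rfl hvc hne ((hdeg .rfl).symm.trans hu)
    ((hdeg huv).symm.trans hv)

end IsReroute

lemma deg_add_two_le [Finite V] (hle : H ≤ G) (hx : G.Adj y x) (hz : G.Adj y z) (hne : x ≠ z)
    (hx' : ¬ H.Adj y x) (hz' : ¬ H.Adj y z) : deg H y + 2 ≤ deg G y := by
  have hsub : insert x (insert z (H.neighborSet y)) ⊆ G.neighborSet y :=
    Set.insert_subset hx (Set.insert_subset hz fun _ h ↦ hle h)
  have hx_notMem : x ∉ insert z (H.neighborSet y) := fun h ↦ h.elim hne hx'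
  have hcard := Set.ncard_le_ncard hsub (Set.toFinite _)
  have hz_notMem : z ∉ H.neighborSet y := hz'
  rwa [Set.ncard_insert_of_notMem hx_notMem (Set.toFinite _),
    Set.ncard_insert_of_notMem hz_notMem (Set.toFinite _)] at hcard

theorem stmt13_general [Finite V] (hmin : IsMinValidFactor G H) (c : H.ConnectedComponent)
    (hpath : ∃ v ∈ c.supp, Nat.card (H.neighborSet v) = 1) (y y' : V) (hy : y ∈ c.supp)
    (hy' : y' ∈ c.supp) (hdeg : y = y' → Nat.card (G.neighborSet y) ≤ 3) (x x' : V)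
    (hxy : G.Adj x y) (hx'y' : G.Adj x' y') (hx : OddCycleComp H (H.connectedComponentMk x))
    (hx' : IsCycleComp H (H.connectedComponentMk x')) :
    H.connectedComponentMk x = H.connectedComponentMk x' := by
  by_contra hxx'
  obtain ⟨w, hwc, hw⟩ := hpath
  have hH := hmin.1.isMinPathCycleFactor
  have hyw : H.Reachable y w := ConnectedComponent.exact (hy.trans hwc.symm)
  have hyy' : H.Reachable y y' := ConnectedComponent.exact (hy.trans hy'.symm)
  have hdeg_y : deg H y = 2 := hH.deg_eq_two fun h ↦ hH.not_adj_of_deg_eq_one hx.2 h hxy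
  have hdeg_y' : deg H y' = 2 := hH.deg_eq_two fun h ↦ hH.not_adj_of_deg_eq_one hx' h hx'y'
  have not_reachable {u : V} (hu : IsCycleComp H (H.connectedComponentMk u)) :
      ¬ H.Reachable y u := fun h ↦ by
    have := isCycleComp_mk_iff.1 hu w (h.symm.trans hyw)
    lia
  have hyx := not_reachable hx.2
  have hyx' := not_reachable hx'
  have hne : y ≠ y' := by
    rintro rfl
    have := deg_add_two_le hH.le hxy.symm hx'y'.symm (fun h ↦ hxx' (h ▸ rfl))
      (fun h ↦ hyx h.reachable) fun h ↦ hyx' h.reachable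
    have := hdeg rfl
    lia
  obtain ⟨A, a, z, hA, hxa, hyz, hzy'⟩ :=
    hH.exists_isReroute hx.2 hxy.symm hyx hyw hw hyy' hne hdeg_y hdeg_y'
  have ha : OddCycleComp H (H.connectedComponentMk a) := ConnectedComponent.sound hxa ▸ hx
  have hvalid := hA.isValidFactor hmin.1 ha.2 hx'
    (fun h ↦ hxx' (ConnectedComponent.sound (hxa.trans h.symm)))
    (fun h ↦ hyx' (hyz.trans h.symm)) hx'y' hzy'
  exact (hA.numOddCycles_lt ha).not_ge (hmin.2 A hvalid hA.numComponents_eq)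

end PathCycleFactors

/-- No path component of a minimal valid factor is joined by edges of G to two
distinct odd cycle components. -/
theorem stmt13 {V : Type*} [Fintype V] (G H : SimpleGraph V) (hG : IsCubic G)
    (hmin : IsMinValidFactor G H) (c : H.ConnectedComponent)
    (hpath : ∃ v ∈ c.supp, Nat.card (H.neighborSet v) = 1)
    (y y' : V) (hy : y ∈ c.supp) (hy' : y' ∈ c.supp) (x x' : V)
    (hxy : G.Adj x y) (hx'y' : G.Adj x' y')
    (hx : OddCycleComp H (H.connectedComponentMk x))
    (hx' : OddCycleComp H (H.connectedComponentMk x')) :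
    H.connectedComponentMk x = H.connectedComponentMk x' := by
  exact stmt13_general hmin c hpath y y' hy hy' (fun _ ↦ (hG y).le) x x' hxy hx'y' hx hx'.2
end

section
/- Let G be a cubic graph and P* a valid factor of G minimizing the number of components and, subject to that, the number of odd cycles. Then the number of odd path components of P* is at least three times the number of odd cycle components of P*. -/
open SimpleGraph

/-!
Let `D` be the set of components of a minimal factor. If a vertex `x` of an odd cycle `c` is
adjacent to a vertex `y` of another component `q`, then cutting `q` next to `y` and gluing the part
that contains `y` to `c` yields a better factor, unless `q` is an odd path that `y` splits into two
parts, each a single vertex or an odd path with adjacent ends. If `q` had a second such vertex `y'`,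
it could be rearranged into a path starting at `y` and merged with `c`. So `y` is determined by `q`,
and so is `x`, since `y` has two neighbours on `q` and degree three.

It remains to see that every vertex of an odd cycle `c` has a neighbour outside `c`. By parity one
vertex has, and the property passes from a vertex `x` of `c` to the next vertex `w`: otherwise `w`
would have a chord to some `v` on `c`. By minimality the ends of any path through all of `c` are
adjacent, and such a path using the chord shows that `x` is adjacent to both cycle neighbours of `v`
and thus has degree at least four. Hence the vertices of the odd cycles, at least three on each,
inject into the odd paths.
-/

section Factors

variable {V : Type*} {G : SimpleGraph V}

theorem pair_le_of_mem_of_mem_of_ne {α : Type*} {s : Multiset α} {a b : α} (ha : a ∈ s)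
    (hb : b ∈ s) (hne : a ≠ b) : {a, b} ≤ s :=
  (Multiset.cons_le_of_notMem (by simpa using hne)).2 ⟨ha, Multiset.singleton_le.2 hb⟩

theorem forall_mem_verts_of_connected {K : G.Subgraph} (hK : K.Connected) {P : V → Prop}
    (hP : ∀ a b, K.Adj a b → P a → P b) {x : V} (hx : x ∈ K.verts) (hPx : P x) :
    ∀ y ∈ K.verts, P y := by
  intro y hy
  obtain ⟨p⟩ := hK.preconnected ⟨x, hx⟩ ⟨y, hy⟩
  suffices h : ∀ a b : K.verts, K.coe.Walk a b → P a → P b from h _ _ p hPx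
  intro a b p
  induction p with
  | nil => exact id
  | cons h _ ih => exact ih ∘ hP _ _ h

theorem supp_connectedComponentMk_eq_verts {K : G.Subgraph} (hK : K.Connected) {H : SimpleGraph V}
    (hadj : ∀ u ∈ K.verts, ∀ v, K.Adj u v ↔ H.Adj u v) {v : V} (hv : v ∈ K.verts) :
    (H.connectedComponentMk v).supp = K.verts := by
  ext w
  rw [ConnectedComponent.mem_supp_iff, ConnectedComponent.eq]
  refine ⟨fun hw => ?_, fun hw => ?_⟩
  · induction (reachable_iff_reflTransGen v w).1 hw.symm with
    | refl => exact hv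
    | tail hva hab ih =>
      have ha := ih ((reachable_iff_reflTransGen _ _).2 hva).symm
      exact ((hadj _ ha _).2 hab).snd_mem
  · exact forall_mem_verts_of_connected hK (P := (H.Reachable · v))
      (fun a b hab ha => ((hadj a hab.fst_mem b).1 hab).symm.reachable.trans ha) hv .rfl w hw

section Walks

variable {u v w x : V}

theorem coe_support_append_cons (p : G.Walk u v) (h : G.Adj v w) (r : G.Walk w x) :
    ((p.append (.cons h r)).support : Multiset V) = p.support + r.support := by
  simp [Walk.support_append]

theorem coe_support_reverse (p : G.Walk u v) :
    (p.reverse.support : Multiset V) = p.support := by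
  simp

theorem ne_of_isPath_append_cons {p : G.Walk u v} {h : G.Adj v w} {r : G.Walk w x}
    (hp : (p.append (.cons h r)).IsPath) : u ≠ x :=
  hp.nil_iff_eq.not.1 (by simp [← Walk.length_eq_zero_iff])

theorem length_eq_one_of_isPath_of_mk_mem_edges {p : G.Walk u v} (hp : p.IsPath)
    (h : s(u, v) ∈ p.edges) : p.length = 1 := by
  have hsnd := hp.eq_snd_of_mem_edges h
  cases p with
  | nil => simp at h
  | cons hadj q =>
    rw [Walk.snd_cons] at hsnd
    subst hsnd
    simpa [Walk.length_eq_zero_iff] using Walk.isPath_iff_nil.1 ((Walk.cons_isPath_iff _ _).1 hp).1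

theorem mem_tail_support_of_isCycle {c : G.Walk u u} (hc : c.IsCycle) {x : V} :
    x ∈ c.support.tail ↔ x ∈ c.support := by
  rw [Walk.mem_support_iff, or_iff_right_of_imp]
  rintro rfl
  exact Walk.end_mem_tail_support hc.not_nil

theorem exists_walk_perm_tail_support_of_isCycle {c : G.Walk u u} (hc : c.IsCycle) {x w : V}
    (h : c.toSubgraph.Adj x w) : ∃ r : G.Walk x w, r.support.Perm c.support.tail := by
  classical
  have hx : x ∈ c.support := Walk.mem_support_of_adj_toSubgraph h
  obtain ⟨c', hc', rfl, hverts⟩ :=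
    (hc.rotate hx).exists_isCycle_snd_verts_eq (by rwa [Walk.toSubgraph_rotate])
  rw [Walk.toSubgraph_rotate] at hverts
  refine ⟨c'.tail.reverse, ?_⟩
  rw [Walk.support_reverse, Walk.support_tail_of_not_nil _ hc'.not_nil]
  refine (List.reverse_perm _).trans ?_
  rw [List.perm_ext_iff_of_nodup hc'.support_nodup hc.support_nodup]
  intro y
  rw [mem_tail_support_of_isCycle hc, mem_tail_support_of_isCycle hc',
    ← Walk.mem_verts_toSubgraph, hverts, Walk.mem_verts_toSubgraph]

theorem exists_isCycle_perm_tail_support_of_isPath {p : G.Walk u v} (hp : p.IsPath)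
    (h : G.Adj u v) (hne : p.length ≠ 1) :
    ∃ c : G.Walk v v, c.IsCycle ∧ c.support.tail = p.support :=
  ⟨.cons h.symm p, Walk.cons_isCycle_iff p h.symm |>.2
    ⟨hp, fun he => hne (length_eq_one_of_isPath_of_mk_mem_edges hp (Sym2.eq_swap ▸ he))⟩, rfl⟩

theorem ncard_neighborSet_toSubgraph_start_of_isPath {p : G.Walk u v} (hp : p.IsPath)
    (hne : u ≠ v) : (p.toSubgraph.neighborSet u).ncard = 1 := by
  rw [hp.neighborSet_toSubgraph_startpoint (hp.nil_iff_eq.not.2 hne), Set.ncard_singleton]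

theorem ncard_neighborSet_toSubgraph_end_of_isPath {p : G.Walk u v} (hp : p.IsPath)
    (hne : u ≠ v) : (p.toSubgraph.neighborSet v).ncard = 1 := by
  rw [hp.neighborSet_toSubgraph_endpoint (hp.nil_iff_eq.not.2 hne), Set.ncard_singleton]

theorem ncard_neighborSet_toSubgraph_of_isPath {p : G.Walk u v} (hp : p.IsPath) {w : V}
    (hw : w ∈ p.support) (hu : w ≠ u) (hv : w ≠ v) : (p.toSubgraph.neighborSet w).ncard = 2 := by
  obtain ⟨i, rfl, hi⟩ := Walk.mem_support_iff_exists_getVert.1 hw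
  refine hp.ncard_neighborSet_toSubgraph_internal_eq_two ?_ (hi.lt_of_ne ?_)
  · rintro rfl
    exact hu p.getVert_zero
  · rintro rfl
    exact hv p.getVert_length

theorem exists_isPath_forall_adj_mem_support [Finite V] (G : SimpleGraph V) (v : V) :
    ∃ (a b : V) (p : G.Walk a b), p.IsPath ∧ v ∈ p.support ∧
      (∀ x, G.Adj a x → x ∈ p.support) ∧ ∀ x, G.Adj b x → x ∈ p.support := by
  have := Fintype.ofFinite V
  let S := {n | ∃ (a b : V) (p : G.Walk a b), p.IsPath ∧ v ∈ p.support ∧ p.length = n}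
  have hS : BddAbove S := ⟨Fintype.card V, by rintro _ ⟨a, b, p, hp, -, rfl⟩; exact hp.length_lt.le⟩
  obtain ⟨a, b, p, hp, hv, hlen⟩ := Nat.sSup_mem (s := S) ⟨0, v, v, .nil, by simp⟩ hS
  have hmax {x a b : V} (p : G.Walk a b) (hp : p.IsPath) (hv : v ∈ p.support)
      (hlen : p.length = sSup S) (h : G.Adj a x) : x ∈ p.support := by
    by_contra hx
    have hle := le_csSup hS
      ⟨x, b, .cons h.symm p, (Walk.cons_isPath_iff _ _).2 ⟨hp, hx⟩, by simp [hv], rfl⟩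
    rw [Walk.length_cons] at hle
    lia
  refine ⟨a, b, p, hp, hv, fun x => hmax p hp hv hlen, fun x hx => ?_⟩
  simpa using hmax p.reverse hp.reverse (by simpa using hv) (by simpa using hlen) hx

theorem mk_mem_edges_or_eq_of_adj [Finite V] {a b : V} {p : G.Walk a b} (hp : p.IsPath)
    (hdeg : ∀ v, (G.neighborSet v).ncard ≤ 2) (ha : ∀ x, G.Adj a x → x ∈ p.support)
    (hb : ∀ x, G.Adj b x → x ∈ p.support) {u v : V} (hu : u ∈ p.support) (huv : G.Adj u v) :
    s(u, v) ∈ p.edges ∨ s(u, v) = s(a, b) := by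
  have hinner {w x : V} (hw : w ∈ p.support) (hwa : w ≠ a) (hwb : w ≠ b) (h : G.Adj w x) :
      s(w, x) ∈ p.edges := by
    rw [← Walk.adj_toSubgraph_iff_mem_edges, ← Subgraph.mem_neighborSet,
      Set.eq_of_subset_of_ncard_le (p.toSubgraph.neighborSet_subset w)
        ((hdeg w).trans (ncard_neighborSet_toSubgraph_of_isPath hp hw hwa hwb).ge)]
    exact h
  by_cases hue : u = a ∨ u = b
  · have hv : v ∈ p.support := by
      rcases hue with rfl | rfl
      exacts [ha v huv, hb v huv]
    by_cases hve : v = a ∨ v = b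
    · exact .inr (by grind [huv.ne])
    · rw [not_or] at hve
      exact .inl (Sym2.eq_swap ▸ hinner hv hve.1 hve.2 huv.symm)
  · rw [not_or] at hue
    exact .inl (hinner hu hue.1 hue.2 huv)

end Walks

section IsCubic

variable [Fintype V]

theorem IsCubic.exists_adj_ne_ne (hG : IsCubic G) (v a b : V) :
    ∃ d, G.Adj v d ∧ d ≠ a ∧ d ≠ b := by
  have hlt : ({a, b} : Set V).ncard < (G.neighborSet v).ncard := by
    rw [← Nat.card_coe_set_eq (G.neighborSet v), hG v]
    exact (Set.ncard_insert_le a {b}).trans_lt (by simp)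
  obtain ⟨d, hd, hne⟩ := Set.exists_mem_notMem_of_ncard_lt_ncard hlt
  exact ⟨d, hd, by simpa using hne⟩

theorem IsCubic.not_adj_of_ne (hG : IsCubic G) {v a b c d : V} (ha : G.Adj v a) (hb : G.Adj v b)
    (hc : G.Adj v c) (hab : a ≠ b) (hac : a ≠ c) (hbc : b ≠ c) (had : d ≠ a) (hbd : d ≠ b)
    (hcd : d ≠ c) : ¬ G.Adj v d := by
  have hsub : ({a, b, c} : Set V) ⊆ G.neighborSet v := by
    simp [Set.insert_subset_iff, ha, hb, hc]
  have hcard : ({a, b, c} : Set V).ncard = 3 := Set.ncard_eq_three.2 ⟨a, b, c, hab, hac, hbc, rfl⟩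
  have heq : {a, b, c} = G.neighborSet v :=
    Set.eq_of_subset_of_ncard_le hsub (by rw [← Nat.card_coe_set_eq, hG v, hcard])
  rw [← mem_neighborSet, ← heq]
  simp [had, hbd, hcd]

theorem IsCubic.exists_adj_notMem_of_odd_card (hG : IsCubic G) {S : Finset V} (hS : Odd S.card) :
    ∃ x ∈ S, ∃ y ∉ S, G.Adj x y := by
  classical
  by_contra! hclosed
  have hdeg (x : (S : Set V)) : (G.induce (S : Set V)).degree x = 3 := by
    have hsub : G.neighborSet x ⊆ S := fun y hxy => not_not.1 fun hy => hclosed x x.2 y hy hxy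
    rw [← hG x, Nat.card_eq_fintype_card, card_neighborSet_eq_degree,
      ← degree_induce_of_neighborSet_subset hsub]
    congr!
  have heven := (G.induce (S : Set V)).even_card_odd_degree_vertices
  rw [Finset.filter_true_of_mem fun x _ => by rw [hdeg x]; decide] at heven
  exact Nat.not_even_iff_odd.2 hS (by simpa using heven)

end IsCubic

/-- A valid component of a factor of `G`, presented by a closed walk around it (cycles) or by a walk
from one end to the other (paths). A path has two distinct ends, and they are not adjacent in `G`
when its number of vertices `p.length + 1` is odd. -/
inductive Piece (G : SimpleGraph V) : Type _
  | path {u v : V} (p : G.Walk u v) (hp : p.IsPath) (hne : u ≠ v)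
      (hna : Even p.length → ¬ G.Adj u v)
  | cycle {u : V} (c : G.Walk u u) (hc : c.IsCycle)

namespace Piece

/-- The vertices of a piece, each of multiplicity one. A cycle drops its base vertex, which its
walk visits twice, from the front of the support. -/
def verts : Piece G → Multiset V
  | path p _ _ _ => p.support
  | cycle c _ => c.support.tail

/-- The piece as a subgraph of `G`. -/
def toSubgraph : Piece G → G.Subgraph
  | path p _ _ _ => p.toSubgraph
  | cycle c _ => c.toSubgraph

/-- The piece is a cycle. -/
def IsCycle : Piece G → Prop
  | path _ _ _ _ => False
  | cycle _ _ => True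

/-- The piece is a cycle with an odd number of vertices. -/
def IsOddCycle (q : Piece G) : Prop := q.IsCycle ∧ Odd q.verts.card

/-- The piece is a path with an odd number of vertices. -/
def IsOddPath (q : Piece G) : Prop := ¬ q.IsCycle ∧ Odd q.verts.card

instance : DecidablePred (IsCycle (G := G))
  | path _ _ _ _ => isFalse id
  | cycle _ _ => isTrue trivial

instance : DecidablePred (IsOddCycle (G := G)) := fun _ => inferInstanceAs (Decidable (_ ∧ _))

instance : DecidablePred (IsOddPath (G := G)) := fun _ => inferInstanceAs (Decidable (_ ∧ _))

theorem verts_path {u v : V} {p : G.Walk u v} (hp : p.IsPath) (hne : u ≠ v)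
    (hna : Even p.length → ¬ G.Adj u v) : (path p hp hne hna).verts = p.support :=
  rfl

theorem not_isOddCycle_path {u v : V} {p : G.Walk u v} (hp : p.IsPath) (hne : u ≠ v)
    (hna : Even p.length → ¬ G.Adj u v) : ¬ (path p hp hne hna).IsOddCycle :=
  fun h => h.1

theorem nodup_verts : ∀ q : Piece G, q.verts.Nodup
  | path _ hp _ _ => hp.support_nodup
  | cycle _ hc => hc.support_nodup

theorem mem_verts_toSubgraph {q : Piece G} {v : V} : v ∈ q.toSubgraph.verts ↔ v ∈ q.verts := by
  cases q with
  | path p => exact p.mem_verts_toSubgraph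
  | cycle c hc => exact c.mem_verts_toSubgraph.trans (mem_tail_support_of_isCycle hc).symm

theorem exists_mem_verts : ∀ q : Piece G, ∃ v, v ∈ q.verts
  | path p _ _ _ => ⟨_, p.start_mem_support⟩
  | cycle _ hc => ⟨_, Walk.end_mem_tail_support hc.not_nil⟩

theorem connected_toSubgraph : ∀ q : Piece G, q.toSubgraph.Connected
  | path p _ _ _ => p.toSubgraph_connected
  | cycle c _ => c.toSubgraph_connected

theorem IsCycle.three_le_card {q : Piece G} (hq : q.IsCycle) : 3 ≤ q.verts.card := by
  cases q with
  | path => exact hq.elim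
  | cycle c hc => simpa [verts] using hc.three_le_length

theorem IsCycle.ncard_neighborSet {q : Piece G} (hq : q.IsCycle) {v : V} (hv : v ∈ q.verts) :
    (q.toSubgraph.neighborSet v).ncard = 2 := by
  cases q with
  | path => exact hq.elim
  | cycle c hc =>
    exact hc.ncard_neighborSet_toSubgraph_eq_two ((mem_tail_support_of_isCycle hc).1 hv)

theorem exists_of_isPath {u v : V} {p : G.Walk u v} (hp : p.IsPath) (hne : u ≠ v) :
    ∃ q : Piece G, q.verts = p.support := by
  by_cases h : Even p.length → ¬ G.Adj u v
  · exact ⟨path p hp hne h, rfl⟩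
  · push Not at h
    obtain ⟨c, hc, hsupp⟩ := exists_isCycle_perm_tail_support_of_isPath hp h.2
      fun h1 => by simp [h1] at h
    exact ⟨cycle c hc, congrArg _ hsupp⟩

theorem IsCycle.exists_walk_of_adj {q : Piece G} (hq : q.IsCycle) {x w : V}
    (h : q.toSubgraph.Adj x w) : ∃ p : G.Walk x w, (p.support : Multiset V) = q.verts := by
  cases q with
  | path => exact hq.elim
  | cycle c hc =>
    obtain ⟨p, hp⟩ := exists_walk_perm_tail_support_of_isCycle hc h
    exact ⟨p, Multiset.coe_eq_coe.2 hp⟩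

theorem IsCycle.exists_walk_of_mem_verts {q : Piece G} (hq : q.IsCycle) {x : V}
    (hx : x ∈ q.verts) : ∃ (w : V) (p : G.Walk x w), (p.support : Multiset V) = q.verts := by
  obtain ⟨w, hw⟩ : (q.toSubgraph.neighborSet x).Nonempty :=
    Set.nonempty_of_ncard_ne_zero (by rw [hq.ncard_neighborSet hx]; decide)
  exact ⟨w, hq.exists_walk_of_adj hw⟩

theorem exists_walk_support_eq : ∀ q : Piece G,
    ∃ (u v : V) (p : G.Walk u v), (p.support : Multiset V) = q.verts
  | path p _ _ _ => ⟨_, _, p, rfl⟩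
  | cycle c hc =>
    have hq : (cycle c hc).IsCycle := trivial
    have ⟨x, hx⟩ := (cycle c hc).exists_mem_verts
    have ⟨w, p, hp⟩ := hq.exists_walk_of_mem_verts hx
    ⟨x, w, p, hp⟩

theorem isPath_of_support_eq {q : Piece G} {u v : V} {p : G.Walk u v}
    (hp : (p.support : Multiset V) = q.verts) : p.IsPath :=
  p.isPath_def.2 (Multiset.coe_nodup.1 (hp ▸ q.nodup_verts))

variable {q : Piece G}

theorem ncard_setOf_mem_verts (q : Piece G) : {v | v ∈ q.verts}.ncard = q.verts.card :=
  Set.ncard_coe_finset ⟨q.verts, q.nodup_verts⟩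

theorem exists_ncard_neighborSet_eq_one (hq : ¬ q.IsCycle) :
    ∃ v ∈ q.verts, (q.toSubgraph.neighborSet v).ncard = 1 := by
  cases q with
  | path p hp hne =>
    exact ⟨_, p.start_mem_support, ncard_neighborSet_toSubgraph_start_of_isPath hp hne⟩
  | cycle => exact (hq trivial).elim

theorem ncard_neighborSet_eq_one_or_two {v : V} (hv : v ∈ q.verts) :
    (q.toSubgraph.neighborSet v).ncard = 1 ∨ (q.toSubgraph.neighborSet v).ncard = 2 := by
  cases q with
  | @path a b p hp hne =>
    by_cases ha : v = a
    · exact .inl (ha ▸ ncard_neighborSet_toSubgraph_start_of_isPath hp hne)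
    by_cases hb : v = b
    · exact .inl (hb ▸ ncard_neighborSet_toSubgraph_end_of_isPath hp hne)
    exact .inr (ncard_neighborSet_toSubgraph_of_isPath hp hv ha hb)
  | cycle c hc => exact .inr (IsCycle.ncard_neighborSet (q := cycle c hc) trivial hv)

theorem not_adj_of_ncard_neighborSet_eq_one (hodd : Odd q.verts.card) {u v : V}
    (hu : u ∈ q.verts) (hv : v ∈ q.verts) (hne : u ≠ v)
    (hu1 : (q.toSubgraph.neighborSet u).ncard = 1) (hv1 : (q.toSubgraph.neighborSet v).ncard = 1) :
    ¬ G.Adj u v := by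
  cases q with
  | @path a b p hp _ hna =>
    have hend : ∀ w ∈ p.support, (p.toSubgraph.neighborSet w).ncard = 1 → w = a ∨ w = b := by
      intro w hw hw1
      by_contra! hab
      simp [ncard_neighborSet_toSubgraph_of_isPath hp hw hab.1 hab.2] at hw1
    have hab : ¬ G.Adj a b := hna (by simpa [verts, Nat.odd_add_one] using hodd)
    rcases hend u hu hu1 with rfl | rfl <;> rcases hend v hv hv1 with rfl | rfl
    exacts [(hne rfl).elim, hab, fun h => hab h.symm, (hne rfl).elim]
  | cycle c hc => simp [IsCycle.ncard_neighborSet (q := cycle c hc) trivial hu] at hu1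

/-- The piece `q` is a connected component of the graph `H`, with all its edges. -/
def IsComponentOf (q : Piece G) (H : SimpleGraph V) : Prop :=
  ∀ u ∈ q.verts, ∀ v, q.toSubgraph.Adj u v ↔ H.Adj u v

theorem IsComponentOf.supp_connectedComponentMk {H : SimpleGraph V} (hq : q.IsComponentOf H) {v : V}
    (hv : v ∈ q.verts) : (H.connectedComponentMk v).supp = {w | w ∈ q.verts} :=
  (supp_connectedComponentMk_eq_verts q.connected_toSubgraph
    (fun u hu => hq u (mem_verts_toSubgraph.1 hu)) (mem_verts_toSubgraph.2 hv)).trans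
    (Set.ext fun _ => mem_verts_toSubgraph)

theorem IsComponentOf.natCard_neighborSet {H : SimpleGraph V} (hq : q.IsComponentOf H) {v : V}
    (hv : v ∈ q.verts) : Nat.card (H.neighborSet v) = (q.toSubgraph.neighborSet v).ncard := by
  have hset : q.toSubgraph.neighborSet v = H.neighborSet v := Set.ext (hq v hv)
  rw [Nat.card_coe_set_eq, hset]

theorem three_mul_countP_isOddCycle_le_card_bind (D : Multiset (Piece G)) :
    3 * D.countP IsOddCycle ≤ ((D.filter IsOddCycle).bind verts).card := by
  rw [Multiset.card_bind, Multiset.countP_eq_card_filter, mul_comm, ← smul_eq_mul,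
    ← Multiset.card_map (Multiset.card ∘ verts)]
  refine Multiset.card_nsmul_le_sum fun n hn => ?_
  obtain ⟨c, hc, rfl⟩ := Multiset.mem_map.1 hn
  exact (Multiset.mem_filter.1 hc).2.1.three_le_card

end Piece

section Decomposition

variable [Fintype V] {D : Multiset (Piece G)} {c q : Piece G}

/-- A family of pieces covering every vertex exactly once, that is, a valid factor of `G` split
into its components. -/
def IsDecomposition (D : Multiset (Piece G)) : Prop :=
  D.bind Piece.verts = Finset.univ.val

/-- A decomposition with the fewest pieces and, subject to that, the fewest odd cycles. -/
structure IsMinimalDecomposition (D : Multiset (Piece G)) : Prop where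
  isDecomposition : IsDecomposition D
  card_le : ∀ D' : Multiset (Piece G), IsDecomposition D' → D.card ≤ D'.card
  countP_le : ∀ D' : Multiset (Piece G), IsDecomposition D' → D'.card = D.card →
    D.countP Piece.IsOddCycle ≤ D'.countP Piece.IsOddCycle

/-- The vertex `y` of the piece `q` is adjacent to an odd cycle of `D` other than `q`. -/
def IsAttached (D : Multiset (Piece G)) (q : Piece G) (y : V) : Prop :=
  ∃ c ∈ D, c.IsOddCycle ∧ c ≠ q ∧ ∃ x ∈ c.verts, G.Adj x y

theorem IsDecomposition.nodup_bind_verts (hD : IsDecomposition D) {A : Multiset (Piece G)}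
    (hA : A ≤ D) : (A.bind Piece.verts).Nodup := by
  obtain ⟨B, rfl⟩ := Multiset.le_iff_exists_add.1 hA
  have hnodup : ((A + B).bind Piece.verts).Nodup := hD ▸ Finset.univ.nodup
  rw [Multiset.add_bind] at hnodup
  exact (Multiset.nodup_add.1 hnodup).1

theorem IsDecomposition.nodup_verts_add_verts (hD : IsDecomposition D) (hc : c ∈ D) (hq : q ∈ D)
    (hne : c ≠ q) : (c.verts + q.verts).Nodup := by
  simpa using hD.nodup_bind_verts (pair_le_of_mem_of_mem_of_ne hc hq hne)

theorem IsDecomposition.eq_of_mem_verts (hD : IsDecomposition D) (hc : c ∈ D) (hq : q ∈ D) {v : V}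
    (hvc : v ∈ c.verts) (hvq : v ∈ q.verts) : c = q := by
  by_contra hne
  exact Multiset.disjoint_left.1 (Multiset.nodup_add.1 (hD.nodup_verts_add_verts hc hq hne)).2.2
    hvc hvq

theorem IsDecomposition.exists_mem_verts (hD : IsDecomposition D) (v : V) :
    ∃ q ∈ D, v ∈ q.verts :=
  Multiset.mem_bind.1 (hD ▸ Finset.mem_univ v)

theorem IsDecomposition.isPath_reverse_append_cons (hD : IsDecomposition D) (hc : c ∈ D)
    (hq : q ∈ D) (hne : c ≠ q)
    {x w y b : V} {p : G.Walk x w} (hp : (p.support : Multiset V) = c.verts)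
    {r : G.Walk y b} (hr : (r.support : Multiset V) ≤ q.verts) (h : G.Adj x y) :
    (p.reverse.append (.cons h r)).IsPath := by
  rw [Walk.isPath_def, ← Multiset.coe_nodup, coe_support_append_cons, coe_support_reverse, hp]
  exact Multiset.nodup_of_le (by grw [hr]) (hD.nodup_verts_add_verts hc hq hne)

theorem IsDecomposition.nodup (hD : IsDecomposition D) : D.Nodup := by
  refine Multiset.nodup_iff_le.2 fun q hq => ?_
  obtain ⟨v, hv⟩ := q.exists_mem_verts
  have hnodup : (q.verts + q.verts).Nodup := by simpa using hD.nodup_bind_verts hq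
  exact Multiset.disjoint_left.1 (Multiset.nodup_add.1 hnodup).2.2 hv hv

namespace IsMinimalDecomposition

theorem card_le_and_countP_le_of_bind_verts_eq (hD : IsMinimalDecomposition D)
    {A N : Multiset (Piece G)} (hA : A ≤ D) (hN : N.bind Piece.verts = A.bind Piece.verts) :
    A.card ≤ N.card ∧
      (N.card = A.card → A.countP Piece.IsOddCycle ≤ N.countP Piece.IsOddCycle) := by
  obtain ⟨B, rfl⟩ := Multiset.le_iff_exists_add.1 hA
  have hNB : IsDecomposition (N + B) := by
    rw [IsDecomposition, Multiset.add_bind, hN, ← Multiset.add_bind]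
    exact hD.isDecomposition
  have hcard := hD.card_le _ hNB
  have hcount := hD.countP_le _ hNB
  simp only [Multiset.card_add, Multiset.countP_add] at hcard hcount
  exact ⟨by lia, fun h => by have := hcount (by lia); lia⟩

theorem adj_of_isOddCycle (hD : IsMinimalDecomposition D) (hcD : c ∈ D) (hc : c.IsOddCycle)
    {a b : V} (p : G.Walk a b) (hp : (p.support : Multiset V) = c.verts) : G.Adj a b := by
  have hpath := Piece.isPath_of_support_eq hp
  have hne : a ≠ b := by
    have hcard := hp ▸ hc.1.three_le_card
    rw [Ne, ← hpath.nil_iff_eq, ← Walk.length_eq_zero_iff]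
    rw [Multiset.coe_card, Walk.length_support] at hcard
    lia
  by_contra hadj
  have hle := hD.card_le_and_countP_le_of_bind_verts_eq
    (N := {.path p hpath hne fun _ => hadj}) (Multiset.singleton_le.2 hcD)
    (by simp [Piece.verts_path, hp])
  simp [← Multiset.cons_zero, hc, Piece.not_isOddCycle_path] at hle

theorem not_adj (hD : IsMinimalDecomposition D) (hc : c ∈ D) (hq : q ∈ D) (hne : c ≠ q)
    {x w y b : V} {p : G.Walk x w} (hp : (p.support : Multiset V) = c.verts)
    {r : G.Walk y b} (hr : (r.support : Multiset V) = q.verts) : ¬ G.Adj x y := by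
  intro hxy
  have hpath := hD.isDecomposition.isPath_reverse_append_cons hc hq hne hp hr.le hxy
  obtain ⟨t, ht⟩ := Piece.exists_of_isPath hpath (ne_of_isPath_append_cons hpath)
  rw [coe_support_append_cons, coe_support_reverse, hp, hr] at ht
  have hle := (hD.card_le_and_countP_le_of_bind_verts_eq (N := {t})
    (pair_le_of_mem_of_mem_of_ne hc hq hne) (by simp [ht])).1
  simp at hle

theorem not_isAttached_start (hD : IsMinimalDecomposition D) (hq : q ∈ D) {y b : V}
    {r : G.Walk y b} (hr : (r.support : Multiset V) = q.verts) : ¬ IsAttached D q y := by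
  rintro ⟨c, hcD, hc, hne, x, hx, hxy⟩
  obtain ⟨w, p, hp⟩ := hc.1.exists_walk_of_mem_verts hx
  exact hD.not_adj hcD hq hne hp hr hxy

-- Otherwise `s` could be cut off as a path and the rest of `q` merged with the odd cycle.
theorem even_length_left_of_isAttached (hD : IsMinimalDecomposition D) (hq : q ∈ D)
    {a z y b : V} {s : G.Walk a z} {h : G.Adj z y} {r : G.Walk y b}
    (hsr : ((s.append (.cons h r)).support : Multiset V) = q.verts) (hy : IsAttached D q y) :
    Even s.length ∧ (a = z ∨ G.Adj a z) := by
  obtain ⟨c, hcD, hc, hne, x, hx, hxy⟩ := hy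
  obtain ⟨w, p, hp⟩ := hc.1.exists_walk_of_mem_verts hx
  have hwb : ¬ G.Adj w b := hD.not_adj hcD hq hne ((coe_support_reverse p).trans hp)
    ((coe_support_reverse _).trans hsr)
  have hs : s.IsPath := (Piece.isPath_of_support_eq hsr).of_append_left
  rw [coe_support_append_cons] at hsr
  have ht := hD.isDecomposition.isPath_reverse_append_cons hcD hq hne hp
    (hsr ▸ Multiset.le_add_left _ _) hxy
  by_contra hvalid
  have haz : a ≠ z := fun haz =>
    hvalid ⟨by simp [Walk.length_eq_zero_iff.2 (hs.nil_iff_eq.2 haz)], .inl haz⟩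
  have hle := (hD.card_le_and_countP_le_of_bind_verts_eq
    (N := {.path s hs haz fun he hadj => hvalid ⟨he, .inr hadj⟩,
      .path _ ht (ne_of_isPath_append_cons ht) fun _ => hwb})
    (pair_le_of_mem_of_mem_of_ne hcD hq hne) (by
      simp only [Multiset.insert_eq_cons, Multiset.cons_bind, Multiset.singleton_bind,
        Piece.verts_path, coe_support_append_cons, coe_support_reverse, hp, ← hsr,
        add_left_comm])).2 rfl
  simp [← Multiset.cons_zero, hc, Piece.not_isOddCycle_path] at hle

theorem even_length_right_of_isAttached (hD : IsMinimalDecomposition D) (hq : q ∈ D)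
    {a y z b : V} {s : G.Walk a y} {h : G.Adj y z} {r : G.Walk z b}
    (hsr : ((s.append (.cons h r)).support : Multiset V) = q.verts) (hy : IsAttached D q y) :
    Even r.length ∧ (b = z ∨ G.Adj b z) := by
  rw [← r.length_reverse]
  refine hD.even_length_left_of_isAttached hq (h := h.symm) (r := s.reverse) ?_ hy
  rw [← hsr, coe_support_append_cons, coe_support_append_cons, coe_support_reverse,
    coe_support_reverse, add_comm]

theorem exists_eq_append_cons_of_isAttached (hD : IsMinimalDecomposition D) (hq : q ∈ D)
    {a b y : V} {p : G.Walk a b} (hp : (p.support : Multiset V) = q.verts) (hyp : y ∈ p.support)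
    (hy : IsAttached D q y) : ∃ (z z' : V) (s : G.Walk a z) (h : G.Adj z y) (h' : G.Adj y z')
      (r : G.Walk z' b), p = s.append (.cons h (.cons h' r)) := by
  obtain ⟨s, r, rfl⟩ := Walk.mem_support_iff_exists_append.1 hyp
  cases r with
  | nil => exact (hD.not_isAttached_start hq ((coe_support_reverse _).trans hp) hy).elim
  | @cons _ z' _ h' r =>
    cases s using Walk.concatRec with
    | Hnil => exact (hD.not_isAttached_start hq hp hy).elim
    | @Hconcat _ z _ s h => exact ⟨z, z', s, h, h', r, Walk.concat_append _ _ _⟩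

theorem isOddPath_of_isAttached (hD : IsMinimalDecomposition D) (hq : q ∈ D) {y : V}
    (hyq : y ∈ q.verts) (hy : IsAttached D q y) : q.IsOddPath := by
  refine ⟨fun hc => ?_, ?_⟩
  · obtain ⟨w, r, hr⟩ := hc.exists_walk_of_mem_verts hyq
    exact hD.not_isAttached_start hq hr hy
  · obtain ⟨a, b, p, hp⟩ := q.exists_walk_support_eq
    obtain ⟨z, z', s, h, h', r, rfl⟩ :=
      hD.exists_eq_append_cons_of_isAttached hq hp (Multiset.mem_coe.1 (hp ▸ hyq)) hy
    have hs := (hD.even_length_left_of_isAttached hq hp hy).1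
    have hr := (hD.even_length_right_of_isAttached hq (Walk.concat_append s h _ ▸ hp) hy).1
    rw [← hp, Multiset.coe_card, Walk.length_support]
    simp only [Walk.length_append, Walk.length_cons]
    grind

-- A second attachment `y'` behind `y` yields the chords `a u` and `z' b`, where `u` precedes `y'`;
-- along these chords `q` can be traversed starting at `y`.
theorem not_isAttached_of_isAttached (hD : IsMinimalDecomposition D) (hq : q ∈ D)
    {a z y z' y' b : V} {s : G.Walk a z} {h : G.Adj z y} {h' : G.Adj y z'} {m : G.Walk z' y'}
    {r : G.Walk y' b}
    (hp : ((s.append (.cons h (.cons h' (m.append r)))).support : Multiset V) = q.verts)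
    (hy : IsAttached D q y) : ¬ IsAttached D q y' := by
  intro hy'
  have hpath := Piece.isPath_of_support_eq hp
  have hs := (hD.even_length_left_of_isAttached hq hp hy).1
  cases m using Walk.concatRec with
  | Hnil =>
    have hs' := (hD.even_length_left_of_isAttached hq (Walk.concat_append s h _ ▸ hp) hy').1
    rw [Walk.length_concat] at hs'
    grind
  | @Hconcat _ u _ m h₂ =>
    rw [Walk.concat_append] at hp hpath
    have hleft : s.append (.cons h (.cons h' (m.append (.cons h₂ r)))) =
        (s.append (.cons h (.cons h' m))).append (.cons h₂ r) := by
      simp only [← Walk.append_assoc, Walk.cons_append]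
    have hright : s.append (.cons h (.cons h' (m.append (.cons h₂ r)))) =
        (s.concat h).append (.cons h' (m.append (.cons h₂ r))) := by
      rw [Walk.concat_append]
    have hau : G.Adj a u :=
      (hD.even_length_left_of_isAttached hq (hleft ▸ hp) hy').2.resolve_left
        (ne_of_isPath_append_cons (hleft ▸ hpath).of_append_left)
    have hbz' : G.Adj b z' :=
      (hD.even_length_right_of_isAttached hq (hright ▸ hp) hy).2.resolve_left
        (ne_of_isPath_append_cons (hpath.of_append_right.of_cons.of_cons)).symm
    refine hD.not_isAttached_start hq (r := .cons h.symm <| s.reverse.append <| .cons hau <|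
      m.reverse.append <| .cons hbz'.symm r.reverse) ?_ hy
    rw [← hp]
    simp only [Walk.support_cons, ← Multiset.cons_coe, ← Multiset.singleton_add,
      coe_support_append_cons, coe_support_reverse]
    abel

theorem eq_of_isAttached (hD : IsMinimalDecomposition D) (hq : q ∈ D) {y y' : V}
    (hyq : y ∈ q.verts) (hy'q : y' ∈ q.verts) (hy : IsAttached D q y) (hy' : IsAttached D q y') :
    y' = y := by
  obtain ⟨a, b, p, hp⟩ := q.exists_walk_support_eq
  obtain ⟨z, z', s, h, h', r, rfl⟩ :=
    hD.exists_eq_append_cons_of_isAttached hq hp (Multiset.mem_coe.1 (hp ▸ hyq)) hy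
  have hp' : ((r.reverse.append (.cons h'.symm (.cons h.symm s.reverse))).support : Multiset V) =
      q.verts := by
    rw [← hp]
    simp only [Walk.support_cons, ← Multiset.cons_coe, ← Multiset.singleton_add,
      coe_support_append_cons, coe_support_reverse]
    abel
  have hmem : y' ∈ s.support ∨ y' = y ∨ y' ∈ r.support := by
    rw [← hp] at hy'q
    simpa [Walk.support_append] using hy'q
  rcases hmem with hmem | heq | hmem
  · rw [← List.mem_reverse, ← Walk.support_reverse] at hmem
    obtain ⟨m, r', hs⟩ := Walk.mem_support_iff_exists_append.1 hmem
    exact (hD.not_isAttached_of_isAttached hq (hs ▸ hp') hy hy').elim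
  · exact heq
  · obtain ⟨m, r', rfl⟩ := Walk.mem_support_iff_exists_append.1 hmem
    exact (hD.not_isAttached_of_isAttached hq hp hy hy').elim

theorem eq_of_adj_of_isAttached (hG : IsCubic G) (hD : IsMinimalDecomposition D) (hq : q ∈ D)
    {x x' y : V} (hyq : y ∈ q.verts) (hy : IsAttached D q y) (hx : x ∉ q.verts) (hx' : x' ∉ q.verts)
    (hxy : G.Adj x y) (hx'y : G.Adj x' y) : x = x' := by
  obtain ⟨a, b, p, hp⟩ := q.exists_walk_support_eq
  obtain ⟨z, z', s, h, h', r, rfl⟩ :=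
    hD.exists_eq_append_cons_of_isAttached hq hp (Multiset.mem_coe.1 (hp ▸ hyq)) hy
  have hzz' : z ≠ z' := by
    have hpath := (Piece.isPath_of_support_eq hp).of_append_right
    rintro rfl
    simp [Walk.cons_isPath_iff] at hpath
  have hz : z ∈ q.verts := by simp [← hp]
  have hz' : z' ∈ q.verts := by simp [← hp]
  by_contra hne
  exact hG.not_adj_of_ne h.symm h' hxy.symm hzz' (by rintro rfl; exact hx hz)
    (by rintro rfl; exact hx hz') (by rintro rfl; exact hx' hz) (by rintro rfl; exact hx' hz')
    (Ne.symm hne) hx'y.symm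

theorem adj_of_isOddCycle_of_adj (hD : IsMinimalDecomposition D) (hcD : c ∈ D) (hc : c.IsOddCycle)
    {x v z w : V} {p : G.Walk x v} {h : G.Adj v z} {r : G.Walk z w}
    (hp : ((p.append (.cons h r)).support : Multiset V) = c.verts) (hvw : G.Adj v w) : G.Adj x z :=
  hD.adj_of_isOddCycle hcD hc (p.append (.cons hvw r.reverse)) (by
    rw [← hp, coe_support_append_cons, coe_support_append_cons, coe_support_reverse])

theorem exists_adj_notMem_verts_of_adj (hG : IsCubic G) (hD : IsMinimalDecomposition D)
    (hcD : c ∈ D) (hc : c.IsOddCycle) {x w : V} (h : c.toSubgraph.Adj x w)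
    (hx : ∃ o ∉ c.verts, G.Adj x o) : ∃ o ∉ c.verts, G.Adj w o := by
  by_contra! hw
  obtain ⟨r, hr⟩ := hc.1.exists_walk_of_adj h
  cases r using Walk.concatRec with
  | Hnil => exact h.ne rfl
  | @Hconcat _ u _ r huw =>
    obtain ⟨v, hwv, hvx, hvu⟩ := hG.exists_adj_ne_ne w x u
    have hvr : v ∈ r.support := by
      have hvc : v ∈ c.verts := not_not.1 fun hv => hw v hv hwv
      rw [← hr, Multiset.mem_coe, Walk.support_concat] at hvc
      simpa [hwv.ne'] using hvc
    obtain ⟨p, r, rfl⟩ := Walk.mem_support_iff_exists_append.1 hvr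
    obtain ⟨z, hvz, r, rfl⟩ := Walk.exists_eq_cons_of_ne hvu r
    obtain ⟨k, hxk, p, rfl⟩ := Walk.exists_eq_cons_of_ne hvx.symm p
    have hxz : G.Adj x z := hD.adj_of_isOddCycle_of_adj hcD hc (p := .cons hxk p) (h := hvz)
      (r := r.concat huw) (by rw [← hr, ← Walk.append_concat, Walk.concat_cons]) hwv.symm
    have hk : k ∈ p.support := p.start_mem_support
    have hz : z ∈ r.support := r.start_mem_support
    have hnodup := (Piece.isPath_of_support_eq hr).support_nodup
    simp only [Walk.support_concat, Walk.support_append, Walk.support_cons, List.tail_cons,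
      List.cons_append, List.nodup_cons, List.nodup_append, List.mem_append] at hnodup
    obtain ⟨o, ho, hxo⟩ := hx
    have hoc : ∀ v ∈ c.verts, o ≠ v := fun v hv hov => ho (hov ▸ hv)
    simp only [← hr, Multiset.mem_coe, Walk.support_concat, Walk.support_append,
      Walk.support_cons, List.tail_cons, List.cons_append, List.mem_append, List.mem_cons] at hoc
    exact hG.not_adj_of_ne (a := w) (b := k) (c := z) (d := o) (c.toSubgraph.adj_sub h) hxk hxz
      (by grind) (by grind) (by grind) (by grind) (by grind) (by grind) hxo

theorem exists_adj_notMem_verts (hG : IsCubic G) (hD : IsMinimalDecomposition D) (hcD : c ∈ D)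
    (hc : c.IsOddCycle) {x : V} (hx : x ∈ c.verts) : ∃ o ∉ c.verts, G.Adj x o := by
  obtain ⟨x₀, hx₀, o, ho, hxo⟩ :=
    hG.exists_adj_notMem_of_odd_card (S := ⟨c.verts, c.nodup_verts⟩) hc.2
  rw [← Piece.mem_verts_toSubgraph] at hx
  exact forall_mem_verts_of_connected c.connected_toSubgraph
    (fun _ _ hab ha => hD.exists_adj_notMem_verts_of_adj hG hcD hc hab ha)
    (Piece.mem_verts_toSubgraph.2 hx₀) ⟨o, ho, hxo⟩ x hx

end IsMinimalDecomposition

theorem IsMinimalDecomposition.three_mul_countP_isOddCycle_le (hG : IsCubic G)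
    (hD : IsMinimalDecomposition D) :
    3 * D.countP Piece.IsOddCycle ≤ D.countP Piece.IsOddPath := by
  refine (Piece.three_mul_countP_isOddCycle_le_card_bind D).trans ?_
  rw [Multiset.countP_eq_card_filter]
  refine Finset.card_le_card_of_forall_subsingleton
    (s := ⟨_, hD.isDecomposition.nodup_bind_verts (Multiset.filter_le _ _)⟩)
    (t := ⟨_, hD.isDecomposition.nodup.filter _⟩)
    (fun x q => ∃ y ∈ q.verts, IsAttached D q y ∧ G.Adj x y ∧ x ∉ q.verts)
    (fun x hx => ?_) fun q hq x hx x' hx' => ?_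
  · obtain ⟨c, hc, hxc⟩ := Multiset.mem_bind.1 hx
    obtain ⟨hcD, hc⟩ := Multiset.mem_filter.1 hc
    obtain ⟨y, hyc, hxy⟩ := hD.exists_adj_notMem_verts hG hcD hc hxc
    obtain ⟨q, hq, hyq⟩ := hD.isDecomposition.exists_mem_verts y
    have hne : c ≠ q := by rintro rfl; exact hyc hyq
    have hy : IsAttached D q y := ⟨c, hcD, hc, hne, x, hxc, hxy⟩
    exact ⟨q, Multiset.mem_filter.2 ⟨hq, hD.isOddPath_of_isAttached hq hyq hy⟩, y, hyq, hy, hxy,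
      fun hxq => hne (hD.isDecomposition.eq_of_mem_verts hcD hq hxc hxq)⟩
  · have hqD := (Multiset.mem_filter.1 hq).1
    obtain ⟨-, y, hyq, hy, hxy, hxq⟩ := hx
    obtain ⟨-, y', hy'q, hy', hx'y', hx'q⟩ := hx'
    obtain rfl := hD.eq_of_isAttached hqD hyq hy'q hy hy'
    exact hD.eq_of_adj_of_isAttached hG hqD hyq hy hxq hx'q hxy hx'y'

end Decomposition

section ValidFactor

variable {H : SimpleGraph V}

theorem not_adj_of_isPath_of_isValidFactor (hH : IsValidFactor G H) {a b : V} {p : H.Walk a b}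
    (hp : p.IsPath) (hne : a ≠ b) (hadj : ∀ u ∈ p.support, ∀ v, p.toSubgraph.Adj u v ↔ H.Adj u v)
    (heven : Even p.length) : ¬ G.Adj a b := by
  have hset {v : V} (hv : v ∈ p.support) : p.toSubgraph.neighborSet v = H.neighborSet v :=
    Set.ext (hadj v hv)
  have hsupp : (H.connectedComponentMk a).supp = {v | v ∈ p.support} := by
    rw [supp_connectedComponentMk_eq_verts p.toSubgraph_connected (fun u hu =>
      hadj u (p.mem_verts_toSubgraph.1 hu)) (p.mem_verts_toSubgraph.2 p.start_mem_support),
      p.verts_toSubgraph]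
  refine hH.2.2 (H.connectedComponentMk a) ?_ a b ?_ ?_ hne ?_ ?_
  · have hcard : {v | v ∈ p.support}.ncard = p.support.length :=
      Set.ncard_coe_finset ⟨(p.support : Multiset V), hp.support_nodup⟩
    rw [Nat.card_coe_set_eq, hsupp, hcard, p.length_support]
    exact heven.add_one
  · simp [hsupp]
  · simp [hsupp]
  · rw [Nat.card_coe_set_eq, ← hset p.start_mem_support,
      ncard_neighborSet_toSubgraph_start_of_isPath hp hne]
  · rw [Nat.card_coe_set_eq, ← hset p.end_mem_support,
      ncard_neighborSet_toSubgraph_end_of_isPath hp hne]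

theorem exists_isComponentOf_of_mk_notMem_edges (hH : H ≤ G) {a b : V} {p : H.Walk a b}
    (hp : p.IsPath) (hab : H.Adj a b) (hmem : s(a, b) ∉ p.edges)
    (hedge : ∀ u ∈ p.support, ∀ v, H.Adj u v → s(u, v) ∈ p.edges ∨ s(u, v) = s(a, b)) :
    ∃ q : Piece G, q.IsComponentOf H ∧ q.verts = p.support := by
  have hcyc : (Walk.cons hab.symm p).IsCycle :=
    (Walk.cons_isCycle_iff p _).2 ⟨hp, Sym2.eq_swap ▸ hmem⟩
  refine ⟨.cycle _ (hcyc.mapLe hH), fun u hu v => ?_, by simp [Piece.verts]⟩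
  rw [Piece.toSubgraph, Walk.adj_toSubgraph_mapLe]
  refine ⟨fun h => h.adj_sub, fun h => ?_⟩
  rw [Walk.adj_toSubgraph_iff_mem_edges, Walk.edges_cons, List.mem_cons, Sym2.eq_swap (a := b)]
  exact (hedge u (by simpa [Piece.verts] using hu) v h).symm

theorem IsValidFactor.exists_isComponentOf [Finite V] (hH : IsValidFactor G H) (v : V) :
    ∃ q : Piece G, q.IsComponentOf H ∧ v ∈ q.verts := by
  obtain ⟨a, b, p, hp, hv, ha, hb⟩ := exists_isPath_forall_adj_mem_support H v
  have hdeg (u : V) : (H.neighborSet u).ncard ≤ 2 := (hH.2.1 u).2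
  have hedge : ∀ u ∈ p.support, ∀ w, H.Adj u w → s(u, w) ∈ p.edges ∨ s(u, w) = s(a, b) :=
    fun u hu w => mk_mem_edges_or_eq_of_adj hp hdeg ha hb hu
  by_cases hab : H.Adj a b ∧ s(a, b) ∉ p.edges
  · obtain ⟨q, hq, hqp⟩ := exists_isComponentOf_of_mk_notMem_edges hH.1 hp hab.1 hab.2 hedge
    exact ⟨q, hq, hqp ▸ hv⟩
  have hadj : ∀ u ∈ p.support, ∀ w, p.toSubgraph.Adj u w ↔ H.Adj u w := by
    refine fun u hu w => ⟨fun h => h.adj_sub, fun h => ?_⟩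
    rw [Walk.adj_toSubgraph_iff_mem_edges]
    refine (hedge u hu w h).elim id fun heq => ?_
    rw [← mem_edgeSet, heq, mem_edgeSet] at h
    exact heq ▸ not_not.1 fun hmem => hab ⟨h, hmem⟩
  have hne : a ≠ b := by
    rintro rfl
    obtain ⟨w, haw⟩ : (H.neighborSet a).Nonempty :=
      Set.nonempty_of_ncard_ne_zero (Nat.one_le_iff_ne_zero.1 (hH.2.1 a).1)
    have hw := ha w haw
    rw [(Walk.isPath_iff_nil.1 hp).eq_nil, Walk.support_nil, List.mem_singleton] at hw
    exact haw.ne hw.symm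
  refine ⟨.path (p.mapLe hH.1) (hp.mapLe hH.1) hne fun heven =>
    not_adj_of_isPath_of_isValidFactor hH hp hne hadj (by simpa using heven), fun u hu w => ?_, ?_⟩
  · rw [← hadj u (by simpa [Piece.verts] using hu)]
    exact Walk.adj_toSubgraph_mapLe hH.1
  · simpa [Piece.verts] using hv

variable [Fintype V] {D : Multiset (Piece G)} {q : Piece G}

/-- The pieces of the decomposition `D` are the components of the graph `H`. -/
structure IsDecompositionOf (D : Multiset (Piece G)) (H : SimpleGraph V) : Prop where
  isDecomposition : IsDecomposition D
  isComponentOf : ∀ q ∈ D, q.IsComponentOf H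

theorem IsDecomposition.exists_isDecompositionOf (hD : IsDecomposition D) :
    ∃ H : SimpleGraph V, IsDecompositionOf D H := by
  refine ⟨⟨fun u v => ∃ q ∈ D, q.toSubgraph.Adj u v, ⟨fun u v ⟨q, hq, h⟩ => ⟨q, hq, h.symm⟩⟩,
    ⟨fun u ⟨q, _, h⟩ => h.ne rfl⟩⟩, hD, fun q hq u hu v => ⟨fun h => ⟨q, hq, h⟩, ?_⟩⟩
  rintro ⟨q', hq', h⟩
  rwa [hD.eq_of_mem_verts hq hq' hu (Piece.mem_verts_toSubgraph.1 (q'.toSubgraph.edge_vert h))]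

namespace IsDecompositionOf

theorem exists_supp_eq (hD : IsDecompositionOf D H) (C : H.ConnectedComponent) :
    ∃ q ∈ D, C.supp = {v | v ∈ q.verts} := by
  obtain ⟨v, rfl⟩ := C.exists_rep
  obtain ⟨q, hq, hv⟩ := hD.isDecomposition.exists_mem_verts v
  exact ⟨q, hq, (hD.isComponentOf q hq).supp_connectedComponentMk hv⟩

theorem natCard_subtype_eq_countP (hD : IsDecompositionOf D H) {P : H.ConnectedComponent → Prop}
    {Q : Piece G → Prop} [DecidablePred Q]
    (hPQ : ∀ q ∈ D, ∀ C : H.ConnectedComponent, C.supp = {v | v ∈ q.verts} → (P C ↔ Q q)) :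
    Nat.card {C // P C} = D.countP Q := by
  choose base hbase using Piece.exists_mem_verts (G := G)
  have hsupp : ∀ q ∈ D, (H.connectedComponentMk (base q)).supp = {v | v ∈ q.verts} :=
    fun q hq => (hD.isComponentOf q hq).supp_connectedComponentMk (hbase q)
  rw [Multiset.countP_eq_card_filter]
  refine .trans (.symm ?_) (Set.ncard_coe_finset ⟨_, hD.isDecomposition.nodup.filter Q⟩)
  refine (Set.ncard_congr (fun q _ => H.connectedComponentMk (base q)) (fun q hq => ?_)
    (fun q q' hq hq' heq => ?_) fun C hC => ?_)
  · obtain ⟨hq, hQ⟩ := Multiset.mem_filter.1 hq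
    exact (hPQ q hq _ (hsupp q hq)).2 hQ
  · have hq := (Multiset.mem_filter.1 hq).1
    have hq' := (Multiset.mem_filter.1 hq').1
    refine hD.isDecomposition.eq_of_mem_verts hq hq' (hbase q) ?_
    have := hsupp q' hq'
    rw [← heq, hsupp q hq] at this
    exact this.le (hbase q)
  · obtain ⟨q, hq, hCq⟩ := hD.exists_supp_eq C
    exact ⟨q, Multiset.mem_filter.2 ⟨hq, (hPQ q hq C hCq).1 hC⟩,
      ConnectedComponent.supp_injective ((hsupp q hq).trans hCq.symm)⟩

theorem numComponents_eq (hD : IsDecompositionOf D H) : numComponents H = D.card := by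
  have hcount := hD.natCard_subtype_eq_countP (P := fun _ => True) (Q := fun _ => True)
    fun _ _ _ _ => Iff.rfl
  rwa [Multiset.countP_True, Nat.card_congr (Equiv.subtypeUnivEquiv fun _ => trivial)] at hcount

theorem numOddCycles_eq (hD : IsDecompositionOf D H) :
    numOddCycles H = D.countP Piece.IsOddCycle := by
  refine hD.natCard_subtype_eq_countP fun q hq C hC => ?_
  rw [OddCycleComp, IsCycleComp, Nat.card_coe_set_eq, hC, q.ncard_setOf_mem_verts, and_comm]
  refine and_congr_left fun _ => ⟨fun h => ?_, fun h v hv => ?_⟩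
  · by_contra hcyc
    obtain ⟨v, hv, hv1⟩ := Piece.exists_ncard_neighborSet_eq_one hcyc
    simpa [(hD.isComponentOf q hq).natCard_neighborSet hv, hv1] using h v hv
  · rw [(hD.isComponentOf q hq).natCard_neighborSet hv, h.ncard_neighborSet hv]

theorem natCard_oddPathComp_eq (hD : IsDecompositionOf D H) :
    Nat.card {C // OddPathComp H C} = D.countP Piece.IsOddPath := by
  refine hD.natCard_subtype_eq_countP fun q hq C hC => ?_
  rw [OddPathComp, Nat.card_coe_set_eq, hC, q.ncard_setOf_mem_verts, and_comm]
  refine and_congr_left fun _ => ⟨fun ⟨v, hv, hv1⟩ h => ?_, fun h => ?_⟩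
  · simp [(hD.isComponentOf q hq).natCard_neighborSet hv, h.ncard_neighborSet hv] at hv1
  · obtain ⟨v, hv, hv1⟩ := Piece.exists_ncard_neighborSet_eq_one h
    exact ⟨v, hv, by rw [(hD.isComponentOf q hq).natCard_neighborSet hv, hv1]⟩

theorem isValidFactor (hD : IsDecompositionOf D H) : IsValidFactor G H := by
  refine ⟨fun u v huv => ?_, fun v => ?_, fun C hodd u v hu hv hne hu1 hv1 => ?_⟩
  · obtain ⟨q, hq, hu⟩ := hD.isDecomposition.exists_mem_verts u
    exact ((hD.isComponentOf q hq u hu v).2 huv).adj_sub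
  · obtain ⟨q, hq, hv⟩ := hD.isDecomposition.exists_mem_verts v
    have := Piece.ncard_neighborSet_eq_one_or_two hv
    rw [(hD.isComponentOf q hq).natCard_neighborSet hv]
    lia
  · obtain ⟨q, hq, hC⟩ := hD.exists_supp_eq C
    rw [Nat.card_coe_set_eq, hC, q.ncard_setOf_mem_verts] at hodd
    rw [hC] at hu hv
    rw [(hD.isComponentOf q hq).natCard_neighborSet hu] at hu1
    rw [(hD.isComponentOf q hq).natCard_neighborSet hv] at hv1
    exact Piece.not_adj_of_ncard_neighborSet_eq_one hodd hu hv hne hu1 hv1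

end IsDecompositionOf

theorem IsValidFactor.exists_isDecompositionOf (hH : IsValidFactor G H) :
    ∃ D : Multiset (Piece G), IsDecompositionOf D H := by
  have := Fintype.ofFinite H.ConnectedComponent
  have hpiece (C : H.ConnectedComponent) : ∃ q : Piece G, q.IsComponentOf H ∧
      C.supp = {v | v ∈ q.verts} := by
    obtain ⟨v, rfl⟩ := C.exists_rep
    obtain ⟨q, hq, hv⟩ := hH.exists_isComponentOf v
    exact ⟨q, hq, hq.supp_connectedComponentMk hv⟩
  choose q hq hsupp using hpiece
  refine ⟨Finset.univ.val.map q, (Multiset.Nodup.ext ?_ Finset.univ.nodup).2 fun v => ?_, ?_⟩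
  · rw [Multiset.bind_map, Multiset.nodup_bind]
    refine ⟨fun C _ => (q C).nodup_verts, Finset.univ.nodup.pairwise fun C _ C' _ hne => ?_⟩
    exact Multiset.disjoint_left.2 fun hv hv' =>
      hne (ConnectedComponent.eq_of_common_vertex ((hsupp C).ge hv) ((hsupp C').ge hv'))
  · have hv : v ∈ (q (H.connectedComponentMk v)).verts := (hsupp _).le rfl
    simpa using ⟨_, hv⟩
  · simpa using hq

end ValidFactor

end Factors

/-- The number of odd paths of a minimal valid factor is at least three times
its number of odd cycles. -/
theorem stmt14 {V : Type*} [Fintype V] (G H : SimpleGraph V) (hG : IsCubic G)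
    (hmin : IsMinValidFactor G H) :
    3 * numOddCycles H ≤ Nat.card {c : H.ConnectedComponent // OddPathComp H c} := by
  obtain ⟨⟨hH, hcomp⟩, hodd⟩ := hmin
  obtain ⟨D, hD⟩ := hH.exists_isDecompositionOf
  rw [hD.numOddCycles_eq, hD.natCard_oddPathComp_eq]
  refine IsMinimalDecomposition.three_mul_countP_isOddCycle_le hG
    ⟨hD.isDecomposition, fun D' hD' => ?_, fun D' hD' hcard => ?_⟩ <;>
  obtain ⟨H', hH'⟩ := hD'.exists_isDecompositionOf
  · simpa only [hD.numComponents_eq, hH'.numComponents_eq] using hcomp H' hH'.isValidFactor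
  · simpa only [hD.numOddCycles_eq, hH'.numOddCycles_eq] using hodd H' hH'.isValidFactor
      (by rw [hD.numComponents_eq, hH'.numComponents_eq, hcard])
end
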